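/- arXiv:1910.08572 — 2 statements merged into one kernel-verified Lean document; each statement's English description precedes it below -/
import Mathlib

section
/- Reality and bound for Evans sums: For every finite field F_q with q elements, every nontrivial additive character ψ : (F_q,+) → ℂˣ and every multiplicative character χ : F_q^× → ℂˣ, the Evans sum S(χ) = −(1/√q) Σ_{x ∈ F_q^×} χ(x) ψ(x − x⁻¹) is a real number satisfying |S(χ)| ≤ 2. -/
open Finset
open scoped Classical

/-- The Evans sum `S(χ) = −(1/√q) ∑_{x ∈ F_q^×} χ(x) ψ(x − x⁻¹)`. -/
noncomputable def evansSum {F : Type*} [Field F] [Fintype F]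
    (ψ : AddChar F ℂ) (χ : Fˣ →* ℂˣ) : ℂ :=
  -(1 / (Real.sqrt (Fintype.card F) : ℂ)) *
    ∑ x : Fˣ, (χ x : ℂ) * ψ ((x : F) - (x : F)⁻¹)

open Polynomial in
theorem stepanov_abstract {k : Type*} [Field k] [Fintype k] (p : ℕ) [Fact p.Prime] [CharP k p]
    (e q s r : ℕ) (hr : r = q * s) (hre : r = p ^ e) (hq : 2 ≤ q) (hs : 4 ≤ s)
    (hcard : Fintype.card k = r * r) (P : k[X]) (hP0 : P ≠ 0) (hP : P.natDegree = (2 * q - 1) * s)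
    (t : k) (M : Finset k) (hM0 : ∀ u ∈ M, u ≠ 0)
    (hM : ∀ u ∈ M, u ^ r * P.eval u ^ r = t * u ^ (r + 1) - u * P.eval u) :
    M.card ≤ r * s + (5 * q + 1) * r := by
  set I := s + 3 * q with hI
  have hfrob : ∀ x : k, x ^ (r * r) = x := fun x => hcard ▸ FiniteField.pow_card x
  let J := Fin I × Fin q × Fin s
  -- the linear map
  let Q : J → k[X] := fun x =>
    X ^ (r * x.2.2 + x.1 + r * (q - x.2.1)) * (C t * X ^ (r + 1) - X * P) ^ (x.2.1 : ℕ)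
  let N := r * s + I + 2 * r * q
  have hPd : (C t * X ^ (r + 1) - X * P).natDegree ≤ 2 * r := by
    refine (natDegree_sub_le _ _).trans (max_le ?_ ?_)
    · refine (natDegree_C_mul_X_pow_le _ _).trans ?_
      nlinarith
    · refine natDegree_mul_le.trans ?_
      rw [natDegree_X, hP, Nat.sub_mul, hr]
      have : s ≤ 2 * q * s := by nlinarith
      rw [mul_assoc] at this ⊢
      omega
  have hQd : ∀ x, (Q x).degree < N := by
    intro x
    obtain ⟨i, b, j⟩ := x
    by_cases h0 : Q (i, b, j) = 0
    · rw [h0, degree_zero]; exact WithBot.bot_lt_coe _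
    rw [← natDegree_lt_iff_degree_lt h0]
    have h1 : (Q (i, b, j)).natDegree ≤ (r * j + i + r * (q - b)) + b * (2 * r) := by
      refine natDegree_mul_le.trans ?_
      rw [natDegree_X_pow]
      refine Nat.add_le_add_left (natDegree_pow_le.trans (Nat.mul_le_mul_left _ hPd)) _
    refine h1.trans_lt ?_
    have hb := b.2; have hj := j.2; have hi := i.2
    obtain ⟨c, hc⟩ := Nat.exists_eq_add_of_lt hb
    have : q - b = c + 1 := by omega
    rw [this]
    simp only [N]
    have : r * (j : ℕ) ≤ r * s := Nat.mul_le_mul_left _ hj.le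
    have : q = b + c + 1 := hc
    have h3 : r * q = r * b + r * c + r :=
      (congrArg (r * ·) this).trans (by ring)
    nlinarith
  let φ : (J → k) →ₗ[k] degreeLT k N :=
    { toFun := fun d => ⟨∑ x, C (d x) * Q x, by
        refine Submodule.sum_mem _ fun x _ => ?_
        rw [← smul_eq_C_mul]
        exact Submodule.smul_mem _ _ (mem_degreeLT.2 (hQd x))⟩
      map_add' := fun d d' => by ext1; simp [add_mul, Finset.sum_add_distrib]
      map_smul' := fun c d => by
        ext1; simp [Finset.mul_sum, mul_assoc, smul_eq_C_mul] }
  have hker : LinearMap.ker φ ≠ ⊥ := by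
    have : FiniteDimensional k (degreeLT k N) := (degreeLTEquiv k N).symm.finiteDimensional
    apply LinearMap.ker_ne_bot_of_finrank_lt
    rw [(degreeLTEquiv k N).finrank_eq]
    simp only [Module.finrank_fintype_fun_eq_card, Fintype.card_fin, J, Fintype.card_prod, N]
    have h1 : I * (q * s) = r * s + 3 * q * r := by rw [hI, hr]; ring
    rw [h1]
    have : I < q * r := by rw [hI, hr]; nlinarith [mul_le_mul hq hs (by norm_num) (by omega)]
    nlinarith
  obtain ⟨d, hd, hd0⟩ := (Submodule.ne_bot_iff _).1 hker
  have hd : ∑ x, C (d x) * Q x = 0 := congrArg Subtype.val hd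
  let G : k[X] := ∑ x : J, C (d x ^ r) * (X ^ ((x.2.2 : ℕ) + r * x.1) * P ^ (x.2.1 : ℕ))
  have hterm : ∀ x : J, d x ≠ 0 →
      (C (d x ^ r) * (X ^ ((x.2.2 : ℕ) + r * x.1) * P ^ (x.2.1 : ℕ))).degree
        = (((x.2.2 : ℕ) + s * (q * x.1 + (2 * q - 1) * x.2.1) : ℕ) : WithBot ℕ) := by
    intro x hx
    rw [degree_C_mul (pow_ne_zero _ hx), degree_eq_natDegree (mul_ne_zero (by simp) (by simp [hP0])),
      natDegree_mul (by simp) (by simp [hP0]), natDegree_X_pow, natDegree_pow, hP, hr]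
    congr 1
    ring
  have hinj : ∀ x y : J, (x.2.2 : ℕ) + s * (q * x.1 + (2 * q - 1) * x.2.1)
      = (y.2.2 : ℕ) + s * (q * y.1 + (2 * q - 1) * y.2.1) → x = y := by
    rintro ⟨i, b, j⟩ ⟨i', b', j'⟩ h
    simp only at h
    have hs0 : 0 < s := by omega
    have e1 := congrArg (· % s) h
    have e2 := congrArg (· / s) h
    simp only [Nat.add_mul_mod_self_left, Nat.mod_eq_of_lt j.2, Nat.mod_eq_of_lt j'.2] at e1
    simp only [Nat.add_mul_div_left _ _ hs0, Nat.div_eq_of_lt j.2, Nat.div_eq_of_lt j'.2,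
      zero_add] at e2
    have hbb : (b : ℕ) = b' := by
      have h1 : ((b : ℕ) : ℤ) ≡ b' [ZMOD q] := by
        have e3 : (q : ℤ) * i + (2 * q - 1) * b = q * i' + (2 * q - 1) * b' := by
          have := congrArg (Nat.cast : ℕ → ℤ) e2
          push_cast [Nat.cast_sub (show 1 ≤ 2 * q by omega)] at this
          exact this
        refine (Int.modEq_iff_dvd).2 ⟨(i' - i + 2 * b' - 2 * b), by linarith⟩
      have h2 : (b : ℕ) ≡ b' [MOD q] := (Int.natCast_modEq_iff).1 h1
      exact Nat.ModEq.eq_of_lt_of_lt h2 b.2 b'.2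
    have hii : (i : ℕ) = i' := by
      rw [hbb] at e2
      have := Nat.add_right_cancel e2
      exact Nat.eq_of_mul_eq_mul_left (by omega) this
    ext <;> simp_all
  have hr0 : r ≠ 0 := by rw [hr]; positivity
  have hGne : G ≠ 0 := by
    have hdeg := degree_sum_eq_of_disjoint
      (fun x : J => C (d x ^ r) * (X ^ ((x.2.2 : ℕ) + r * x.1) * P ^ (x.2.1 : ℕ))) Finset.univ (by
      intro x hx y hy hxy
      simp only [Set.mem_ofPred_eq, Finset.mem_univ, true_and] at hx hy
      have hx' : d x ≠ 0 := fun h => hx (by simp [h, hr0])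
      have hy' : d y ≠ 0 := fun h => hy (by simp [h, hr0])
      simp only [Function.onFun, Function.comp]
      rw [hterm x hx', hterm y hy']
      intro h
      exact hxy (hinj x y (by exact_mod_cast h)))
    obtain ⟨x, hx⟩ := Function.ne_iff.1 hd0
    intro h0
    change G.degree = _ at hdeg
    rw [h0, degree_zero] at hdeg
    have := Finset.le_sup (f := fun i => degree ((fun x : J => C (d x ^ r) * (X ^ ((x.2.2 : ℕ) + r * x.1) * P ^ (x.2.1 : ℕ))) i)) (Finset.mem_univ x)
    rw [← hdeg] at this
    simp only at this
    rw [hterm x hx] at this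
    exact WithBot.natCast_ne_bot _ (le_bot_iff.1 this)
  have hGdeg : G.natDegree ≤ r * s + (5 * q + 1) * r := by
    refine natDegree_sum_le_of_forall_le _ _ ?_
    rintro x -
    by_cases hx : d x = 0
    · simp [hx, hr0]
    rw [natDegree_le_iff_degree_le, hterm x hx]
    norm_cast
    have hi : (x.1 : ℕ) ≤ s + 3 * q := x.1.2.le
    have hb : (x.2.1 : ℕ) ≤ q := x.2.1.2.le
    have hj : (x.2.2 : ℕ) ≤ s := x.2.2.2.le
    have h1 : s * (q * x.1 + (2 * q - 1) * x.2.1) ≤ s * (q * (s + 3 * q) + (2 * q) * q) := by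
      gcongr; omega
    have h2 : s ≤ r := by rw [hr]; nlinarith
    calc _ ≤ r + s * (q * (s + 3 * q) + (2 * q) * q) := by omega
      _ = _ := by rw [hr]; ring
  refine (Polynomial.card_le_degree_of_subset_roots (p := G) (Z := M) ?_).trans hGdeg
  intro u hu
  rw [mem_roots hGne, IsRoot.def]
  have hu0 := hM0 u hu
  have huM := hM u hu
  have hz : u ^ (r * q) * (G.eval u) ^ r = 0 := by
    have hsum : (G.eval u) ^ r =
        ∑ x : J, (d x ^ r * (u ^ ((x.2.2 : ℕ) + r * x.1) * P.eval u ^ (x.2.1 : ℕ))) ^ r := by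
      simp only [G, eval_finsetSum, eval_mul, eval_C, eval_pow, eval_X]
      rw [hre, sum_pow_char_pow]
    rw [hsum, Finset.mul_sum]
    have h0 := congrArg (eval u) hd
    rw [eval_zero, eval_finsetSum] at h0
    rw [← h0]
    refine Finset.sum_congr rfl fun x _ => ?_
    simp only [Q, eval_mul, eval_C, eval_pow, eval_X, eval_sub]
    rw [← huM]
    have e1 : (u ^ (r * (x.1 : ℕ))) ^ r = u ^ (x.1 : ℕ) := by
      rw [← pow_mul, show r * (x.1 : ℕ) * r = (r * r) * x.1 by ring, pow_mul, hfrob]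
    have e2 : (d x ^ r) ^ r = d x := by rw [← pow_mul, hfrob]
    have e3 : u ^ (r * q) = u ^ (r * (q - x.2.1)) * u ^ (r * (x.2.1 : ℕ)) := by
      rw [← pow_add, ← mul_add, Nat.sub_add_cancel x.2.1.2.le]
    rw [mul_pow, mul_pow, e2, pow_add, mul_pow, e1, e3, mul_pow]
    ring
  have := (mul_eq_zero.1 hz).resolve_left (pow_ne_zero _ hu0)
  exact (pow_eq_zero_iff hr0).1 this

open Polynomial in
theorem stepanov_count {k : Type*} [Field k] [Fintype k] (p : ℕ) [Fact p.Prime] [CharP k p]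
    (f q M : ℕ) (hqp : q = p ^ f) (hq : 2 ≤ q) (hM : 2 ≤ M)
    (hcard : Fintype.card k = q ^ (2 * (M + 1))) (a : k) (ha : a ≠ 0) (t : k) :
    (Finset.univ.filter fun u : k => u ≠ 0 ∧
      ∑ i ∈ range (2 * (M + 1)), (a * u ^ (q - 1) - (a * u ^ (q - 1))⁻¹) ^ q ^ i = t).card
      ≤ q ^ (M + 1) * q ^ M + (5 * q + 1) * q ^ (M + 1) := by
  set s := q ^ M with hs
  set r := q ^ (M + 1) with hr
  have hrs : r = q * s := by rw [hr, hs, pow_succ']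
  have hs4 : 4 ≤ s := by
    calc 4 = 2 ^ 2 := by norm_num
      _ ≤ q ^ 2 := Nat.pow_le_pow_left hq 2
      _ ≤ q ^ M := Nat.pow_le_pow_right (by omega) hM
  have hle : ∀ i ∈ range (M + 1), (q - 1) * q ^ i ≤ r := by
    intro i hi
    rw [Finset.mem_range] at hi
    calc (q - 1) * q ^ i ≤ q * q ^ M :=
          Nat.mul_le_mul (by omega) (Nat.pow_le_pow_right (by omega) (by omega))
      _ = r := hrs.symm
  let T : ℕ → k[X] := fun i => C (a ^ q ^ i) * X ^ (r + (q - 1) * q ^ i)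
      - C (a⁻¹ ^ q ^ i) * X ^ (r - (q - 1) * q ^ i)
  let P : k[X] := ∑ i ∈ range (M + 1), T i
  have hTd : ∀ i, (T i).natDegree ≤ r + (q - 1) * q ^ i := by
    intro i
    refine (natDegree_sub_le _ _).trans (max_le (natDegree_C_mul_X_pow_le _ _) ?_)
    exact (natDegree_C_mul_X_pow_le _ _).trans (by omega)
  have hpos : 0 < (q - 1) * s := by
    have : 0 < q - 1 := by omega
    positivity
  have hcoeffP : P.coeff (r + (q - 1) * s) = a ^ q ^ M := by
    simp only [P]
    rw [finsetSum_coeff, Finset.sum_range_succ, Finset.sum_eq_zero, zero_add]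
    · simp only [T, coeff_sub, coeff_C_mul, coeff_X_pow]
      rw [if_pos rfl, if_neg (by omega)]
      simp
    · intro i hi
      rw [Finset.mem_range] at hi
      apply coeff_eq_zero_of_natDegree_lt
      refine (hTd i).trans_lt ?_
      have : q ^ i < s := Nat.pow_lt_pow_right (by omega) hi
      have : (q - 1) * q ^ i < (q - 1) * s := Nat.mul_lt_mul_of_pos_left this (by omega)
      omega
  have hdegle : P.natDegree ≤ r + (q - 1) * s := by
    refine natDegree_sum_le_of_forall_le _ _ fun i hi => (hTd i).trans ?_
    rw [Finset.mem_range] at hi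
    have : q ^ i ≤ s := Nat.pow_le_pow_right (by omega) (by omega)
    gcongr
  have hne : P.coeff (r + (q - 1) * s) ≠ 0 := by rw [hcoeffP]; exact pow_ne_zero _ ha
  have hP0 : P ≠ 0 := fun h => hne (by rw [h, coeff_zero])
  have hPd : P.natDegree = (2 * q - 1) * s := by
    rw [le_antisymm hdegle (le_natDegree_of_ne_zero hne), hrs, ← add_mul]
    congr 1; omega
  refine stepanov_abstract p (f * (M + 1)) q s r hrs (by rw [hr, hqp, pow_mul]) hq hs4
    (by rw [hcard, hr, ← pow_add]; congr 1; ring) P hP0 hPd t _ (by simp +contextual) ?_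
  intro u hu
  rw [Finset.mem_filter] at hu
  obtain ⟨-, hu0, hut⟩ := hu
  set g := a * u ^ (q - 1) - (a * u ^ (q - 1))⁻¹ with hg
  set τ := ∑ i ∈ range (M + 1), g ^ q ^ i with hτ
  have hPu : P.eval u = u ^ r * τ := by
    simp only [P, eval_finsetSum, hτ, Finset.mul_sum]
    refine Finset.sum_congr rfl fun i hi => ?_
    have hgi : g ^ q ^ i = (a * u ^ (q - 1)) ^ q ^ i - ((a * u ^ (q - 1))⁻¹) ^ q ^ i := by
      rw [hg, hqp, ← pow_mul, sub_pow_char_pow]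
    rw [hgi]
    simp only [T, eval_sub, eval_mul, eval_C, eval_pow, eval_X]
    rw [pow_add, pow_sub₀ _ hu0 (hle i hi), mul_inv, mul_pow, mul_pow, inv_pow, inv_pow, pow_mul]
    field_simp
    
  have hτr : τ ^ r = t - τ := by
    rw [← hut, two_mul, Finset.sum_range_add, add_sub_cancel_left]
    rw [hτ, hr, hqp, ← pow_mul, sum_pow_char_pow]
    refine Finset.sum_congr rfl fun i _ => ?_
    rw [← pow_mul, ← pow_mul, ← pow_mul, ← pow_add]
    congr 2
    ring
  have hfrob : u ^ (r * r) = u := by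
    have := FiniteField.pow_card u
    rwa [hcard, two_mul, pow_add] at this
  rw [hPu, mul_pow, ← pow_mul, hfrob, hτr]
  ring

theorem inner_sum_bound {F K : Type*} [Field F] [Fintype F] [Field K] [Fintype K] [Algebra F K]
    (M : ℕ) (hM : 2 ≤ M) (hfr : Module.finrank F K = 2 * (M + 1))
    (ψ : AddChar F ℂ) (hψ : ψ ≠ 1) (a : Kˣ) :
    ‖∑ u : Kˣ, ψ (Algebra.trace F K
        (((a * u ^ (Fintype.card F - 1) : Kˣ) : K) - ((a * u ^ (Fintype.card F - 1) : Kˣ) : K)⁻¹))‖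
      ≤ (Fintype.card F * (5 * Fintype.card F + 1) * Fintype.card F ^ (M + 1) + 1 : ℝ) := by
  obtain ⟨p, hp, f, hpp, hpf⟩ := FiniteField.card' F
  have := Fact.mk hpp
  have : CharP K p := charP_of_injective_algebraMap (algebraMap F K).injective p
  set q := Fintype.card F with hqdef
  have hq : 2 ≤ q := Fintype.one_lt_card
  have hcard : Fintype.card K = q ^ (2 * (M + 1)) := by
    rw [← hfr, Module.card_eq_pow_finrank (K := F) (V := K)]
  set g : Kˣ → F := fun u => Algebra.trace F K
        (((a * u ^ (q - 1) : Kˣ) : K) - ((a * u ^ (q - 1) : Kˣ) : K)⁻¹) with hg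
  set B := q ^ (M + 1) * q ^ M + (5 * q + 1) * q ^ (M + 1) with hB
  have hN : ∀ t : F, (Finset.univ.filter fun u => g u = t).card ≤ B := by
    intro t
    refine le_trans ?_ (stepanov_count (k := K) p f q M hpf hq hM hcard a a.ne_zero
      (algebraMap F K t))
    refine Finset.card_le_card_of_injOn (fun u : Kˣ => (u : K)) ?_ (fun x _ y _ h => Units.ext h)
    intro u hu
    simp only [Finset.coe_filter, Finset.mem_univ, true_and, Set.mem_ofPred_eq] at hu ⊢
    refine ⟨u.ne_zero, ?_⟩
    rw [← hu, hg, FiniteField.algebraMap_trace_eq_sum_pow, hfr]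
    simp [hqdef, Nat.card_eq_fintype_card]
  have hsumN : ∑ t : F, (Finset.univ.filter fun u => g u = t).card = q ^ (2 * (M + 1)) - 1 := by
    rw [← Finset.card_eq_sum_card_fiberwise (f := g) (s := Finset.univ) (t := Finset.univ) (by simp),
      Finset.card_univ, Fintype.card_units, hcard]
  have h1 : ∑ u : Kˣ, ψ (g u) =
      -∑ t : F, ((B : ℂ) - ((Finset.univ.filter fun u => g u = t).card : ℂ)) * ψ t := by
    have h2 : ∑ t : F, ψ t = 0 := AddChar.sum_eq_zero_of_ne_one hψ
    simp only [sub_mul, Finset.sum_sub_distrib, ← Finset.mul_sum, h2]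
    rw [← Finset.sum_fiberwise (s := Finset.univ) (g := g)]
    simp only [mul_zero, zero_sub, neg_neg]
    refine Finset.sum_congr rfl fun t _ => ?_
    rw [Finset.sum_congr rfl (g := fun _ => ψ t), Finset.sum_const, nsmul_eq_mul]
    intro u hu
    rw [(Finset.mem_filter.1 hu).2]
  rw [h1, norm_neg]
  refine (norm_sum_le _ _).trans ?_
  have h3 : ∀ t : F, ‖((B : ℂ) - ((Finset.univ.filter fun u => g u = t).card : ℂ)) * ψ t‖
      = (B : ℝ) - ((Finset.univ.filter fun u => g u = t).card : ℝ) := by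
    intro t
    rw [norm_mul, AddChar.norm_apply, mul_one]
    have : ((B : ℂ) - ((Finset.univ.filter fun u => g u = t).card : ℂ))
      = (((B : ℝ) - ((Finset.univ.filter fun u => g u = t).card : ℝ) : ℝ) : ℂ) := by push_cast; rfl
    rw [this, Complex.norm_real, Real.norm_of_nonneg]
    have : ((Finset.univ.filter fun u => g u = t).card : ℝ) ≤ B := by exact_mod_cast hN t
    linarith
  rw [Finset.sum_congr rfl fun t _ => h3 t, Finset.sum_sub_distrib,
    ← Nat.cast_sum Finset.univ (fun t => (Finset.univ.filter fun u => g u = t).card), hsumN,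
    Nat.cast_sub (Nat.one_le_pow _ _ (by omega)), Finset.sum_const, Finset.card_univ, ← hqdef, hB]
  push_cast
  rw [nsmul_eq_mul]
  apply le_of_eq
  ring

theorem ext_sum_bound {F K : Type*} [Field F] [Fintype F] [Field K] [Fintype K] [Algebra F K]
    (M : ℕ) (hM : 2 ≤ M) (hfr : Module.finrank F K = 2 * (M + 1))
    (ψ : AddChar F ℂ) (hψ : ψ ≠ 1) (χ : MulChar F ℂ) :
    ‖∑ x : K, χ (Algebra.norm F x) * ψ (Algebra.trace F K (x - x⁻¹))‖
      ≤ (Fintype.card F * (5 * Fintype.card F + 1) * Fintype.card F ^ (M + 1) + 1 : ℝ) := by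
  have : FiniteDimensional F K := Module.finite_of_finrank_pos (by omega)
  set B : ℝ := (Fintype.card F * (5 * Fintype.card F + 1) * Fintype.card F ^ (M + 1) + 1 : ℝ)
  have hunits : ∑ x : K, χ (Algebra.norm F x) * ψ (Algebra.trace F K (x - x⁻¹))
      = ∑ x : Kˣ, χ (Algebra.norm F (x : K)) * ψ (Algebra.trace F K ((x : K) - (x : K)⁻¹)) := by
    symm
    refine Finset.sum_of_injOn (fun x : Kˣ => (x : K)) (fun x _ y _ h => Units.ext h) (by simp) ?_
      (fun _ _ => rfl)
    intro x _ hx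
    have : x = 0 := by
      by_contra h
      exact hx ⟨Units.mk0 x h, by simp⟩
    subst this
    rw [Algebra.norm_zero, MulChar.map_zero, zero_mul]
  rw [hunits]
  set S := ∑ x : Kˣ, χ (Algebra.norm F (x : K)) * ψ (Algebra.trace F K ((x : K) - (x : K)⁻¹))
  have key : (Fintype.card Kˣ : ℂ) * S = ∑ x : Kˣ, χ (Algebra.norm F (x : K)) *
      ∑ u : Kˣ, ψ (Algebra.trace F K (((x * u ^ (Fintype.card F - 1) : Kˣ) : K)
        - ((x * u ^ (Fintype.card F - 1) : Kˣ) : K)⁻¹)) := by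
    simp only [Finset.mul_sum]
    rw [Finset.sum_comm]
    have : ∀ u : Kˣ, S = ∑ x : Kˣ, χ (Algebra.norm F (x : K)) *
      ψ (Algebra.trace F K (((x * u ^ (Fintype.card F - 1) : Kˣ) : K)
        - ((x * u ^ (Fintype.card F - 1) : Kˣ) : K)⁻¹)) := by
      intro u
      simp only [S]
      rw [← Equiv.sum_comp (Equiv.mulRight (u ^ (Fintype.card F - 1)))]
      refine Finset.sum_congr rfl fun x _ => ?_
      simp only [Equiv.coe_mulRight]
      congr 2
      push_cast
      rw [map_mul, map_pow, FiniteField.pow_card_sub_one_eq_one, mul_one]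
      exact Algebra.norm_ne_zero_iff.2 u.ne_zero
    rw [← Finset.sum_congr rfl fun u _ => this u, Finset.sum_const, Finset.card_univ, nsmul_eq_mul]
  have hpos : (0 : ℝ) < Fintype.card Kˣ := by exact_mod_cast Fintype.card_pos
  have h1 : (Fintype.card Kˣ : ℝ) * ‖S‖ ≤ Fintype.card Kˣ * B := by
    calc (Fintype.card Kˣ : ℝ) * ‖S‖ = ‖(Fintype.card Kˣ : ℂ) * S‖ := by
          rw [norm_mul, Complex.norm_natCast]
      _ ≤ ∑ x : Kˣ, B := by
          rw [key]
          refine (norm_sum_le _ _).trans (Finset.sum_le_sum fun x _ => ?_)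
          rw [norm_mul]
          have hx : ‖χ (Algebra.norm F (x : K))‖ ≤ 1 := by
            refine (Complex.norm_eq_one_of_pow_eq_one (n := Fintype.card F - 1) ?_ ?_).le
            · rw [← map_pow, FiniteField.pow_card_sub_one_eq_one, map_one]
              exact Algebra.norm_ne_zero_iff.2 x.ne_zero
            · have : 2 ≤ Fintype.card F := Fintype.one_lt_card
              omega
          calc _ ≤ 1 * ‖_‖ := mul_le_mul_of_nonneg_right hx (norm_nonneg _)
            _ ≤ B := by rw [one_mul]; exact inner_sum_bound M hM hfr ψ hψ x
      _ = _ := by rw [Finset.sum_const, Finset.card_univ, nsmul_eq_mul]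
  exact le_of_mul_le_mul_left h1 hpos

open Polynomial in
/-- The multiplicative function on monic polynomials attached to the pair of characters. -/
noncomputable def evansLam {F : Type*} [Field F] (ψ : AddChar F ℂ) (χ : MulChar F ℂ) (f : F[X]) : ℂ :=
  χ ((-1) ^ f.natDegree * f.coeff 0) * ψ (-f.nextCoeff + f.coeff 1 / f.coeff 0)

open Polynomial in
theorem evansLam_zero {F : Type*} [Field F] (ψ : AddChar F ℂ) (χ : MulChar F ℂ) (f : F[X])
    (h : f.coeff 0 = 0) : evansLam ψ χ f = 0 := by
  rw [evansLam, h, mul_zero, MulChar.map_zero, zero_mul]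

open Polynomial in
theorem evansLam_one {F : Type*} [Field F] (ψ : AddChar F ℂ) (χ : MulChar F ℂ) :
    evansLam ψ χ 1 = 1 := by
  simp [evansLam, nextCoeff, coeff_one]

open Polynomial in
theorem evansLam_mul {F : Type*} [Field F] (ψ : AddChar F ℂ) (χ : MulChar F ℂ) (f g : F[X])
    (hf : f.Monic) (hg : g.Monic) :
    evansLam ψ χ (f * g) = evansLam ψ χ f * evansLam ψ χ g := by
  by_cases h1 : f.coeff 0 = 0
  · rw [evansLam_zero _ _ f h1, evansLam_zero, zero_mul]; rw [mul_coeff_zero, h1, zero_mul]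
  by_cases h2 : g.coeff 0 = 0
  · rw [evansLam_zero _ _ g h2, evansLam_zero, mul_zero]; rw [mul_coeff_zero, h2, mul_zero]
  simp only [evansLam]
  rw [hf.natDegree_mul hg, hf.nextCoeff_mul hg, mul_coeff_zero, mul_coeff_one]
  rw [mul_mul_mul_comm, ← map_mul, ← AddChar.map_add_eq_mul]
  congr 2
  · ring
  · field_simp; ring

open Polynomial in
theorem evansLam_pow {F : Type*} [Field F] (ψ : AddChar F ℂ) (χ : MulChar F ℂ) (f : F[X])
    (hf : f.Monic) (n : ℕ) : evansLam ψ χ (f ^ n) = evansLam ψ χ f ^ n := by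
  induction n with
  | zero => simp [evansLam_one]
  | succ n ih => rw [pow_succ, evansLam_mul _ _ _ _ (hf.pow n) hf, ih, pow_succ]

open Polynomial IntermediateField in
theorem minpoly_inv_eq {F K : Type*} [Field F] [Field K] [Algebra F K] [FiniteDimensional F K]
    (x : K) (hx : x ≠ 0) :
    minpoly F x⁻¹ = C ((minpoly F x).coeff 0)⁻¹ * (minpoly F x).reverse := by
  have hxint : IsIntegral F x := Algebra.IsIntegral.isIntegral x
  have hxint' : IsIntegral F x⁻¹ := Algebra.IsIntegral.isIntegral _
  have h0 : (minpoly F x).coeff 0 ≠ 0 := minpoly.coeff_zero_ne_zero hxint hx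
  have hadj : F⟮x⁻¹⟯ = F⟮x⟯ := by
    apply le_antisymm
    · rw [adjoin_simple_le_iff]; exact inv_mem (mem_adjoin_simple_self F x)
    · rw [adjoin_simple_le_iff]
      have := inv_mem (mem_adjoin_simple_self F x⁻¹)
      rwa [inv_inv] at this
  have hdeg : (minpoly F x⁻¹).natDegree = (minpoly F x).natDegree := by
    rw [← adjoin.finrank hxint, ← adjoin.finrank hxint', hadj]
  have htr : (minpoly F x).natTrailingDegree = 0 := natTrailingDegree_eq_zero.2 (Or.inr h0)
  have hrd : (minpoly F x).reverse.natDegree = (minpoly F x).natDegree := by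
    rw [reverse_natDegree, htr, Nat.sub_zero]
  have hrl : (minpoly F x).reverse.leadingCoeff = (minpoly F x).coeff 0 := by
    rw [reverse_leadingCoeff, trailingCoeff, htr]
  symm
  apply minpoly.unique_of_degree_le_degree_minpoly
  · rw [Monic, leadingCoeff_mul, leadingCoeff_C, hrl, inv_mul_cancel₀ h0]
  · rw [map_mul]
    let := invertibleOfNonzero hx
    have := (eval₂_reverse_eq_zero_iff (algebraMap F K) x (minpoly F x)).2 (minpoly.aeval F x)
    rw [invOf_eq_inv] at this
    rw [aeval_def, aeval_def, this, mul_zero]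
  · rw [degree_C_mul (inv_ne_zero h0), degree_eq_natDegree (minpoly.ne_zero hxint'), hdeg, ← hrd]
    exact degree_le_natDegree

open Polynomial IntermediateField in
theorem evansLam_minpoly {F K : Type*} [Field F] [Field K] [Algebra F K] [FiniteDimensional F K]
    (ψ : AddChar F ℂ) (χ : MulChar F ℂ) (x : K) :
    evansLam ψ χ (minpoly F x) ^ (Module.finrank F K / (minpoly F x).natDegree)
      = χ (Algebra.norm F x) * ψ (Algebra.trace F K (x - x⁻¹)) := by
  have hxint : IsIntegral F x := Algebra.IsIntegral.isIntegral x
  have hdpos : 0 < (minpoly F x).natDegree := minpoly.natDegree_pos hxint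
  have htower : (minpoly F x).natDegree * Module.finrank F⟮x⟯ K = Module.finrank F K := by
    rw [← adjoin.finrank hxint]; exact Module.finrank_mul_finrank _ _ _
  have hdiv : Module.finrank F K / (minpoly F x).natDegree = Module.finrank F⟮x⟯ K := by
    rw [← htower, Nat.mul_div_cancel_left _ hdpos]
  have hepos : 0 < Module.finrank F⟮x⟯ K := Module.finrank_pos
  rw [hdiv]
  by_cases hx : x = 0
  · rw [evansLam_zero, zero_pow hepos.ne', hx, Algebra.norm_zero, MulChar.map_zero, zero_mul]
    exact (minpoly.coeff_zero_eq_zero hxint).2 hx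
  have h0 : (minpoly F x).coeff 0 ≠ 0 := minpoly.coeff_zero_ne_zero hxint hx
  have hnorm : Algebra.norm F x =
      ((-1) ^ (minpoly F x).natDegree * (minpoly F x).coeff 0) ^ Module.finrank F⟮x⟯ K := by
    rw [Algebra.norm_eq_norm_adjoin]
    congr 1
    have := Algebra.PowerBasis.norm_gen_eq_coeff_zero_minpoly (adjoin.powerBasis hxint)
    simpa [minpoly_gen F x] using this
  have hrn : (minpoly F x⁻¹).nextCoeff = (minpoly F x).coeff 1 / (minpoly F x).coeff 0 := by
    have hd : (minpoly F x⁻¹).natDegree = (minpoly F x).natDegree := by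
      rw [minpoly_inv_eq x hx, natDegree_C_mul (inv_ne_zero h0), reverse_natDegree,
        natTrailingDegree_eq_zero.2 (Or.inr h0), Nat.sub_zero]
    rw [nextCoeff_of_natDegree_pos (by omega), hd, minpoly_inv_eq x hx, coeff_C_mul, coeff_reverse,
      revAt_le (by omega), show (minpoly F x).natDegree - ((minpoly F x).natDegree - 1) = 1 by omega]
    field_simp
  have hdeq : Module.finrank F⟮x⁻¹⟯ K = Module.finrank F⟮x⟯ K := by
    have hadj : F⟮x⁻¹⟯ = F⟮x⟯ := by
      apply le_antisymm
      · rw [adjoin_simple_le_iff]; exact inv_mem (mem_adjoin_simple_self F x)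
      · rw [adjoin_simple_le_iff]
        have := inv_mem (mem_adjoin_simple_self F x⁻¹)
        rwa [inv_inv] at this
    rw [hadj]
  rw [map_sub, trace_eq_finrank_mul_minpoly_nextCoeff, trace_eq_finrank_mul_minpoly_nextCoeff,
    hdeq, hrn, hnorm, evansLam, mul_pow, map_pow, ← AddChar.map_nsmul_eq_pow]
  congr 2
  rw [nsmul_eq_mul]
  ring

open Polynomial in
theorem finite_monic (F : Type*) [Field F] [Fintype F] (d : ℕ) :
    {f : F[X] | f.Monic ∧ f.natDegree = d}.Finite := by
  have : Finite (degreeLT F d) := Finite.of_equiv _ (degreeLTEquiv F d).symm.toEquiv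
  have h2 : Finite {f : F[X] // f.Monic ∧ f.natDegree = d} :=
    Finite.of_equiv _ (monicEquivDegreeLT d).symm
  exact Set.finite_coe_iff.1 h2

open Polynomial in
/-- Monic polynomials of degree `d`. -/
noncomputable def Mon (F : Type*) [Field F] [Fintype F] (d : ℕ) : Finset F[X] :=
  (finite_monic F d).toFinset

open Polynomial in
theorem mem_Mon {F : Type*} [Field F] [Fintype F] {d : ℕ} {f : F[X]} :
    f ∈ Mon F d ↔ f.Monic ∧ f.natDegree = d := by
  simp [Mon]

open Polynomial in
/-- Monic irreducible polynomials of degree at most `n`. -/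
noncomputable def Irr (F : Type*) [Field F] [Fintype F] (n : ℕ) : Finset F[X] :=
  ((range (n + 1)).biUnion (Mon F)).filter Irreducible

open Polynomial in
theorem mem_Irr {F : Type*} [Field F] [Fintype F] {n : ℕ} {f : F[X]} :
    f ∈ Irr F n ↔ f.Monic ∧ Irreducible f ∧ f.natDegree ≤ n := by
  simp only [Irr, Finset.mem_filter, Finset.mem_biUnion, Finset.mem_range, mem_Mon]
  constructor
  · rintro ⟨⟨d, hd, hf, rfl⟩, hi⟩
    exact ⟨hf, hi, by omega⟩
  · rintro ⟨hf, hi, h⟩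
    exact ⟨⟨_, by omega, hf, rfl⟩, hi⟩

/-- Coefficients of the L-function. -/
noncomputable def evansL {F : Type*} [Field F] [Fintype F] (ψ : AddChar F ℂ) (χ : MulChar F ℂ)
    (d : ℕ) : ℂ := ∑ f ∈ Mon F d, evansLam ψ χ f

/-- Power sums of the L-function. -/
noncomputable def evansT {F : Type*} [Field F] [Fintype F] (ψ : AddChar F ℂ) (χ : MulChar F ℂ)
    (n : ℕ) : ℂ := ∑ P ∈ (Irr F n).filter (fun P => P.natDegree ∣ n),
      (P.natDegree : ℂ) * evansLam ψ χ P ^ (n / P.natDegree)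

open Polynomial in
theorem degree_decomp {F : Type*} [Field F] [Fintype F] (n : ℕ) (f : F[X]) (hf : f ∈ Mon F n) :
    ∑ P ∈ Irr F n, ∑ k ∈ Finset.Icc 1 n, (if P ^ k ∣ f then (P.natDegree : ℂ) else 0) = n := by
  obtain ⟨hm, hd⟩ := mem_Mon.1 hf
  have hf0 := hm.ne_zero
  set m := UniqueFactorizationMonoid.normalizedFactors f with hmdef
  have hprod : m.prod = f := by
    rw [hmdef, UniqueFactorizationMonoid.prod_normalizedFactors_eq hf0, hm.normalize_eq_self]
  have hmem : ∀ P ∈ m, P.Monic ∧ Irreducible P ∧ P ∣ f := by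
    intro P hP
    have hi := UniqueFactorizationMonoid.irreducible_of_normalized_factor P hP
    refine ⟨?_, hi, UniqueFactorizationMonoid.dvd_of_mem_normalizedFactors hP⟩
    rw [← UniqueFactorizationMonoid.normalize_normalized_factor P hP]
    exact monic_normalize hi.ne_zero
  have hdeg : n = (m.map natDegree).sum := by
    rw [← hd, ← hprod]
    exact natDegree_multiset_prod_of_monic _ (fun P hP => (hmem P hP).1)
  have hsub : m.toFinset ⊆ Irr F n := by
    intro P hP
    obtain ⟨h1, h2, h3⟩ := hmem P (Multiset.mem_toFinset.1 hP)
    exact mem_Irr.2 ⟨h1, h2, hd ▸ natDegree_le_of_dvd h3 hf0⟩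
  have hcount : ∀ P ∈ Irr F n, ∀ k, P ^ k ∣ f ↔ k ≤ m.count P := by
    intro P hP k
    obtain ⟨h1, h2, h3⟩ := mem_Irr.1 hP
    have h4 := UniqueFactorizationMonoid.emultiplicity_eq_count_normalizedFactors h2 hf0
    rw [h1.normalize_eq_self] at h4
    rw [pow_dvd_iff_le_emultiplicity, h4, Nat.cast_le]
  have hle : ∀ P ∈ Irr F n, m.count P ≤ n := by
    intro P hP
    obtain ⟨h1, h2, h3⟩ := mem_Irr.1 hP
    have h4 := natDegree_le_of_dvd ((hcount P hP _).2 le_rfl) hf0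
    rw [natDegree_pow, hd] at h4
    have := h2.natDegree_pos
    nlinarith
  have : ∀ P ∈ Irr F n, ∑ k ∈ Finset.Icc 1 n, (if P ^ k ∣ f then (P.natDegree : ℂ) else 0)
      = ((m.count P * P.natDegree : ℕ) : ℂ) := by
    intro P hP
    rw [← Finset.sum_filter, Finset.sum_const]
    have : (Finset.Icc 1 n).filter (fun k => P ^ k ∣ f) = Finset.Icc 1 (m.count P) := by
      ext k
      have := hle P hP
      simp only [Finset.mem_filter, Finset.mem_Icc, hcount P hP]
      omega
    rw [this]
    simp
  rw [Finset.sum_congr rfl this, ← Nat.cast_sum]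
  congr 1
  rw [Finset.sum_multiset_map_count] at hdeg
  refine Eq.trans ?_ hdeg.symm
  symm
  refine (Finset.sum_subset hsub ?_)
  intro P _ hP
  rw [Multiset.count_eq_zero.2 (fun h => hP (Multiset.mem_toFinset.2 h))]
  simp

open Polynomial in
theorem sum_multiples {F : Type*} [Field F] [Fintype F] (ψ : AddChar F ℂ) (χ : MulChar F ℂ)
    (n : ℕ) (g : F[X]) (hg : g.Monic) :
    ∑ f ∈ (Mon F n).filter (fun f => g ∣ f), evansLam ψ χ f =
      if g.natDegree ≤ n then evansLam ψ χ g * evansL ψ χ (n - g.natDegree) else 0 := by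
  split_ifs with h
  · rw [evansL, Finset.mul_sum]
    symm
    refine Finset.sum_nbij (fun h => g * h) ?_ ?_ ?_ ?_
    · intro a ha
      obtain ⟨h1, h2⟩ := mem_Mon.1 ha
      refine Finset.mem_filter.2 ⟨mem_Mon.2 ⟨hg.mul h1, ?_⟩, dvd_mul_right _ _⟩
      rw [hg.natDegree_mul h1]; omega
    · intro a _ b _ hab
      exact mul_left_cancel₀ hg.ne_zero hab
    · intro f hf
      obtain ⟨h1, c, rfl⟩ := Finset.mem_filter.1 hf
      obtain ⟨h2, h3⟩ := mem_Mon.1 h1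
      have hc := hg.of_mul_monic_left h2
      refine ⟨c, mem_Mon.2 ⟨hc, ?_⟩, rfl⟩
      rw [hg.natDegree_mul hc] at h3; omega
    · intro a ha
      exact (evansLam_mul _ _ _ _ hg (mem_Mon.1 ha).1).symm
  · refine Finset.sum_eq_zero fun f hf => absurd ?_ h
    obtain ⟨h1, h2⟩ := Finset.mem_filter.1 hf
    obtain ⟨h3, rfl⟩ := mem_Mon.1 h1
    exact natDegree_le_of_dvd h2 h3.ne_zero

open Polynomial in
theorem evans_newton {F : Type*} [Field F] [Fintype F] (ψ : AddChar F ℂ) (χ : MulChar F ℂ)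
    (n : ℕ) : (n : ℂ) * evansL ψ χ n =
      ∑ j ∈ Finset.Icc 1 n, evansT ψ χ j * evansL ψ χ (n - j) := by
  have h1 : (n : ℂ) * evansL ψ χ n = ∑ P ∈ Irr F n, ∑ k ∈ Finset.Icc 1 n,
      if k * P.natDegree ≤ n then
        (P.natDegree : ℂ) * (evansLam ψ χ P ^ k * evansL ψ χ (n - k * P.natDegree)) else 0 := by
    rw [evansL, Finset.mul_sum]
    calc _ = ∑ f ∈ Mon F n, ∑ P ∈ Irr F n, ∑ k ∈ Finset.Icc 1 n,
          (if P ^ k ∣ f then (P.natDegree : ℂ) else 0) * evansLam ψ χ f := by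
          refine Finset.sum_congr rfl fun f hf => ?_
          rw [← degree_decomp n f hf]
          simp only [Finset.sum_mul]
      _ = _ := by
          rw [Finset.sum_comm]
          refine Finset.sum_congr rfl fun P hP => ?_
          rw [Finset.sum_comm]
          refine Finset.sum_congr rfl fun k _ => ?_
          have hPm := (mem_Irr.1 hP).1
          have := sum_multiples ψ χ n (P ^ k) (hPm.pow k)
          rw [natDegree_pow, evansLam_pow _ _ _ hPm] at this
          rw [← mul_ite_zero, ← this, Finset.mul_sum, Finset.sum_filter]
          refine Finset.sum_congr rfl fun f _ => ?_
          split_ifs <;> simp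
  have h2 : ∀ j ∈ Finset.Icc 1 n, evansT ψ χ j * evansL ψ χ (n - j) = ∑ P ∈ Irr F n,
      if P.natDegree ∣ j then
        (P.natDegree : ℂ) * (evansLam ψ χ P ^ (j / P.natDegree) * evansL ψ χ (n - j)) else 0 := by
    intro j hj
    rw [Finset.mem_Icc] at hj
    rw [evansT, Finset.sum_mul, ← Finset.sum_filter]
    have : (Irr F j).filter (fun P => P.natDegree ∣ j) = (Irr F n).filter (fun P => P.natDegree ∣ j) := by
      ext P
      simp only [Finset.mem_filter, mem_Irr]
      constructor
      · rintro ⟨⟨a, b, c⟩, d⟩; exact ⟨⟨a, b, by omega⟩, d⟩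
      · rintro ⟨⟨a, b, c⟩, d⟩; exact ⟨⟨a, b, Nat.le_of_dvd (by omega) d⟩, d⟩
    rw [this]
    exact Finset.sum_congr rfl fun P _ => mul_assoc _ _ _
  rw [h1, Finset.sum_congr rfl h2, Finset.sum_comm (s := Finset.Icc 1 n)]
  refine Finset.sum_congr rfl fun P hP => ?_
  have hpos := (mem_Irr.1 hP).2.1.natDegree_pos
  rw [← Finset.sum_filter, ← Finset.sum_filter]
  refine Finset.sum_nbij' (fun k => k * P.natDegree) (fun j => j / P.natDegree) ?_ ?_ ?_ ?_ ?_
  · intro k hk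
    simp only [Finset.mem_filter, Finset.mem_Icc] at hk ⊢
    exact ⟨⟨Nat.mul_pos hk.1.1 hpos, hk.2⟩, dvd_mul_left _ _⟩
  · intro j hj
    simp only [Finset.mem_filter, Finset.mem_Icc] at hj ⊢
    obtain ⟨⟨a, b⟩, c, rfl⟩ := hj
    rw [Nat.mul_div_cancel_left _ hpos]
    refine ⟨⟨Nat.pos_of_ne_zero (by rintro rfl; simp at a), ?_⟩, by rw [mul_comm]; exact b⟩
    nlinarith
  · intro k _
    exact Nat.mul_div_cancel _ hpos
  · intro j hj
    exact Nat.div_mul_cancel (Finset.mem_filter.1 hj).2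
  · intro k _
    simp only [Nat.mul_div_cancel _ hpos]

open Polynomial in
theorem card_fiber_minpoly {F K : Type*} [Field F] [Fintype F] [Field K] [Fintype K] [Algebra F K]
    (n : ℕ) (hn : Module.finrank F K = n) (P : F[X]) (hm : P.Monic) (hi : Irreducible P)
    (hP : P.natDegree ∣ n) :
    (Finset.univ.filter fun x : K => minpoly F x = P).card = P.natDegree := by
  have : FiniteDimensional F K := Module.Finite.of_finite
  have hn0 : 0 < n := hn ▸ Module.finrank_pos
  have hsplit : (P.map (algebraMap F K)).Splits := by
    have h1 := (hi.natDegree_dvd_iff_dvd_X_pow_card_pow_sub_X (n := n)).1 hP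
    have h2 := (FiniteField.isSplittingField_sub K F).splits'
    rw [Fintype.card_eq_nat_card, Module.natCard_eq_pow_finrank (K := F) (V := K), hn] at h2
    refine Splits.of_dvd h2 ?_ (map_dvd (mapRingHom (algebraMap F K)) h1)
    rw [Polynomial.map_ne_zero_iff (algebraMap F K).injective]
    exact FiniteField.X_pow_card_pow_sub_X_ne_zero F hn0.ne' Finite.one_lt_card
  have hsep : P.Separable := PerfectField.separable_of_irreducible hi
  have heq : (Finset.univ.filter fun x : K => minpoly F x = P)
      = (P.map (algebraMap F K)).roots.toFinset := by
    ext x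
    rw [Finset.mem_filter, Multiset.mem_toFinset, mem_roots (Polynomial.map_ne_zero hm.ne_zero),
      IsRoot.def, eval_map_algebraMap, eq_comm, minpoly.eq_iff_aeval_eq_zero hi hm]
    simp
  rw [heq, Multiset.toFinset_card_of_nodup (nodup_roots hsep.map),
    ← hsplit.natDegree_eq_card_roots, natDegree_map]

open Polynomial in
theorem evansT_eq {F K : Type*} [Field F] [Fintype F] [Field K] [Fintype K] [Algebra F K]
    (ψ : AddChar F ℂ) (χ : MulChar F ℂ) (n : ℕ) (hn : Module.finrank F K = n) :
    ∑ x : K, χ (Algebra.norm F x) * ψ (Algebra.trace F K (x - x⁻¹)) = evansT ψ χ n := by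
  have : FiniteDimensional F K := Module.Finite.of_finite
  have hn0 : 0 < n := hn ▸ Module.finrank_pos
  simp only [← evansLam_minpoly]
  rw [evansT, hn, ← Finset.sum_fiberwise_of_maps_to (g := fun x : K => minpoly F x)
    (t := (Irr F n).filter (fun P => P.natDegree ∣ n))]
  · refine Finset.sum_congr rfl fun P hP => ?_
    obtain ⟨hP1, hP2⟩ := Finset.mem_filter.1 hP
    obtain ⟨hm, hi, -⟩ := mem_Irr.1 hP1
    rw [Finset.sum_congr rfl (g := fun _ => evansLam ψ χ P ^ (n / P.natDegree)), Finset.sum_const,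
      nsmul_eq_mul]
    · congr 2
      exact card_fiber_minpoly n hn P hm hi hP2
    · intro x hx
      rw [(Finset.mem_filter.1 hx).2]
  · intro x _
    have hxint : IsIntegral F x := Algebra.IsIntegral.isIntegral x
    have hd : (minpoly F x).natDegree ∣ n := hn ▸ minpoly.degree_dvd hxint
    exact Finset.mem_filter.2 ⟨mem_Irr.2 ⟨minpoly.monic hxint, minpoly.irreducible hxint,
      Nat.le_of_dvd hn0 hd⟩, hd⟩

open Polynomial in
theorem evansL_zero {F : Type*} [Field F] [Fintype F] (ψ : AddChar F ℂ) (χ : MulChar F ℂ) :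
    evansL ψ χ 0 = 1 := by
  have : Mon F 0 = {1} := by
    ext f
    rw [mem_Mon, Finset.mem_singleton]
    constructor
    · rintro ⟨h1, h2⟩; exact h1.natDegree_eq_zero.1 h2
    · rintro rfl; exact ⟨monic_one, natDegree_one⟩
  rw [evansL, this, Finset.sum_singleton, evansLam_one]

open Polynomial in
theorem evansL_two {F : Type*} [Field F] [Fintype F] (ψ : AddChar F ℂ) (hψ : ψ ≠ 1)
    (χ : MulChar F ℂ) : evansL ψ χ 2 = Fintype.card F := by
  have hdeg : ∀ a b : F, (X ^ 2 + C a * X + C b : F[X]).natDegree = 2 := fun a b => by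
    compute_degree!
  have hmon : ∀ a b : F, (X ^ 2 + C a * X + C b : F[X]).Monic := fun a b => by
    monicity!
  have h1 : evansL ψ χ 2 = ∑ x : F × F, evansLam ψ χ (X ^ 2 + C x.1 * X + C x.2) := by
    rw [evansL]
    symm
    refine Finset.sum_nbij (fun x : F × F => (X ^ 2 + C x.1 * X + C x.2 : F[X])) ?_ ?_ ?_
      (fun _ _ => rfl)
    · intro x _; exact mem_Mon.2 ⟨hmon _ _, hdeg _ _⟩
    · intro x _ y _ h
      have e1 := congrArg (fun f => coeff f 1) h
      have e0 := congrArg (fun f => coeff f 0) h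
      simp [coeff_X, coeff_C] at e0 e1
      exact Prod.ext e1 e0
    · intro f hf
      obtain ⟨hm, hd⟩ := mem_Mon.1 hf
      refine ⟨(f.coeff 1, f.coeff 0), by simp, ?_⟩
      have := hm.as_sum
      rw [hd] at this
      conv_rhs => rw [this]
      simp [Finset.sum_range_succ]
      ring
  have h2 : ∀ a b : F, evansLam ψ χ (X ^ 2 + C a * X + C b) = χ b * ψ (a * (b⁻¹ - 1)) := by
    intro a b
    rw [evansLam, nextCoeff_of_natDegree_pos (by rw [hdeg]; norm_num), hdeg]
    congr 2
    · simp
    · simp [coeff_X, coeff_C]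
      ring
  rw [h1, Fintype.sum_prod_type_right]
  simp only [h2, ← Finset.mul_sum]
  have hprim := AddChar.IsPrimitive.of_ne_one hψ
  simp only [AddChar.sum_mulShift _ hprim]
  rw [Finset.sum_eq_single 1]
  · simp
  · intro b _ hb
    have : b⁻¹ - 1 ≠ 0 := by rw [sub_ne_zero]; simpa using hb
    simp [this]
  · simp

open Polynomial in
theorem evansL_big {F : Type*} [Field F] [Fintype F] (ψ : AddChar F ℂ) (hψ : ψ ≠ 1)
    (χ : MulChar F ℂ) (d : ℕ) (hd : 3 ≤ d) : evansL ψ χ d = 0 := by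
  obtain ⟨c, hc⟩ := AddChar.ne_one_iff.1 hψ
  have hlt : ∀ (c : F) (f : F[X]), f ∈ Mon F d → (C c * X ^ (d - 1)).degree < f.degree := by
    intro c f hf
    obtain ⟨hm, hd'⟩ := mem_Mon.1 hf
    rw [degree_eq_natDegree hm.ne_zero, hd']
    refine (degree_C_mul_X_pow_le _ _).trans_lt ?_
    exact_mod_cast (by omega : d - 1 < d)
  have hmem : ∀ (c : F) (f : F[X]), f ∈ Mon F d → f + C c * X ^ (d - 1) ∈ Mon F d := by
    intro c f hf
    obtain ⟨hm, hd'⟩ := mem_Mon.1 hf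
    refine mem_Mon.2 ⟨hm.add_of_left (hlt c f hf), ?_⟩
    rw [natDegree_add_eq_left_of_degree_lt (hlt c f hf), hd']
  have hlam : ∀ f ∈ Mon F d, evansLam ψ χ (f + C (-c) * X ^ (d - 1)) = ψ c * evansLam ψ χ f := by
    intro f hf
    obtain ⟨hm, hd'⟩ := mem_Mon.1 hf
    obtain ⟨hm2, hd2⟩ := mem_Mon.1 (hmem (-c) f hf)
    rw [evansLam, evansLam, nextCoeff_of_natDegree_pos (by omega),
      nextCoeff_of_natDegree_pos (by omega), hd', hd2]
    have e0 : (f + C (-c) * X ^ (d - 1)).coeff 0 = f.coeff 0 := by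
      rw [coeff_add, coeff_C_mul, coeff_X_pow, if_neg (by omega)]; simp
    have e1 : (f + C (-c) * X ^ (d - 1)).coeff 1 = f.coeff 1 := by
      rw [coeff_add, coeff_C_mul, coeff_X_pow, if_neg (by omega)]; simp
    have e2 : (f + C (-c) * X ^ (d - 1)).coeff (d - 1) = f.coeff (d - 1) - c := by
      rw [coeff_add, coeff_C_mul, coeff_X_pow, if_pos rfl]; ring
    rw [e0, e1, e2, show -(f.coeff (d - 1) - c) + f.coeff 1 / f.coeff 0
      = c + (-f.coeff (d - 1) + f.coeff 1 / f.coeff 0) by ring, AddChar.map_add_eq_mul]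
    ring
  have h1 : evansL ψ χ d = ψ c * evansL ψ χ d := by
    conv_rhs => rw [evansL, Finset.mul_sum]
    rw [← Finset.sum_congr rfl hlam, evansL]
    symm
    refine Finset.sum_nbij' (fun f => f + C (-c) * X ^ (d - 1)) (fun f => f + C c * X ^ (d - 1))
      (fun f hf => hmem _ f hf) (fun f hf => hmem _ f hf) ?_ ?_ (fun _ _ => rfl)
    · intro f _; simp
    · intro f _; simp
  have h2 : (ψ c - 1) * evansL ψ χ d = 0 := by rw [sub_mul, ← h1]; ring
  exact (mul_eq_zero.1 h2).resolve_left (sub_ne_zero.2 hc)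

theorem evansL_one {F : Type*} [Field F] [Fintype F] (ψ : AddChar F ℂ) (χ : MulChar F ℂ) :
    evansL ψ χ 1 = evansT ψ χ 1 := by
  have := evans_newton ψ χ 1
  simpa [evansL_zero] using this

theorem evansT_two {F : Type*} [Field F] [Fintype F] (ψ : AddChar F ℂ) (hψ : ψ ≠ 1)
    (χ : MulChar F ℂ) : evansT ψ χ 2 = 2 * Fintype.card F - evansT ψ χ 1 ^ 2 := by
  have := evans_newton ψ χ 2
  rw [Finset.sum_Icc_succ_top (by norm_num), Finset.Icc_self, Finset.sum_singleton,
    evansL_two ψ hψ, show 2 - 1 = 1 from rfl, show 2 - (1 + 1) = 0 from rfl, evansL_zero,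
    evansL_one] at this
  push_cast at this
  linear_combination -this

theorem evansT_rec {F : Type*} [Field F] [Fintype F] (ψ : AddChar F ℂ) (hψ : ψ ≠ 1)
    (χ : MulChar F ℂ) (n : ℕ) : evansT ψ χ (n + 3) =
      -(evansT ψ χ 1 * evansT ψ χ (n + 2)) - Fintype.card F * evansT ψ χ (n + 1) := by
  have := evans_newton ψ χ (n + 3)
  rw [evansL_big ψ hψ χ _ (by omega), mul_zero, Finset.sum_Icc_succ_top (by omega),
    Finset.sum_Icc_succ_top (by omega), Finset.sum_Icc_succ_top (by omega),
    Finset.sum_eq_zero, zero_add, show n + 3 - (n + 1) = 2 by omega,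
    show n + 3 - (n + 1 + 1) = 1 by omega, show n + 3 - (n + 2 + 1) = 0 by omega, evansL_zero,
    evansL_one, evansL_two ψ hψ] at this
  · linear_combination -this
  · intro j hj
    rw [Finset.mem_Icc] at hj
    rw [evansL_big ψ hψ χ _ (by omega), mul_zero]

theorem evansT_bound {F : Type*} [Field F] [Fintype F] (ψ : AddChar F ℂ) (hψ : ψ ≠ 1)
    (χ : MulChar F ℂ) (M : ℕ) (hM : 2 ≤ M) : ‖evansT ψ χ (2 * (M + 1))‖ ≤
      (Fintype.card F * (5 * Fintype.card F + 1) * Fintype.card F ^ (M + 1) + 1 : ℝ) := by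
  obtain ⟨p, hp, f, hpp, hpf⟩ := FiniteField.card' F
  have := Fact.mk hpp
  have : NeZero (2 * (M + 1)) := ⟨by omega⟩
  let := Fintype.ofFinite (FiniteField.Extension F p (2 * (M + 1)))
  have hfr := FiniteField.finrank_extension F p (2 * (M + 1))
  rw [← evansT_eq (K := FiniteField.Extension F p (2 * (M + 1))) ψ χ _ hfr]
  exact ext_sum_bound M hM hfr ψ hψ χ

theorem real_root_bound (q s : ℝ) (hq : 1 ≤ q) (T : ℕ → ℂ) (h1 : T 1 = s)
    (h2 : T 2 = 2 * q - T 1 ^ 2)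
    (hrec : ∀ n, T (n + 3) = -(T 1 * T (n + 2)) - q * T (n + 1))
    (hb : ∀ M : ℕ, 2 ≤ M → ‖T (2 * (M + 1))‖ ≤ q * (5 * q + 1) * q ^ (M + 1) + 1) :
    s ^ 2 ≤ 4 * q := by
  by_contra! hs
  set D := Real.sqrt (s ^ 2 - 4 * q) with hD
  have hD2 : D ^ 2 = s ^ 2 - 4 * q := Real.sq_sqrt (by linarith)
  have hDpos : 0 < D := Real.sqrt_pos.2 (by linarith)
  obtain ⟨α, β, hsum, hprod⟩ : ∃ α β : ℝ, α + β = -s ∧ α * β = q :=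
    ⟨(-s + D) / 2, (-s - D) / 2, by ring, by nlinarith⟩
  have hT : ∀ n, T (n + 1) = -((α ^ (n + 1) + β ^ (n + 1) : ℝ) : ℂ) ∧
      T (n + 2) = -((α ^ (n + 2) + β ^ (n + 2) : ℝ) : ℂ) := by
    intro n
    induction n with
    | zero =>
      have hs' : s = -(α + β) := by linarith
      refine ⟨?_, ?_⟩
      · rw [zero_add, h1, hs']; push_cast; ring
      · rw [zero_add, h2, h1, hs', ← hprod]; push_cast; ring
    | succ n ih =>
      refine ⟨ih.2, ?_⟩
      have hs' : s = -(α + β) := by linarith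
      rw [show n + 1 + 2 = n + 3 by ring, hrec, ih.1, ih.2, h1, hs', ← hprod]
      push_cast; ring
  have hxy : α ^ 2 + β ^ 2 > 2 * q := by
    have h7 : (α + β) ^ 2 = s ^ 2 := by rw [hsum]; ring
    have h8 : (α + β) ^ 2 = α ^ 2 + β ^ 2 + 2 * (α * β) := by ring
    rw [hprod] at h8
    linarith
  obtain ⟨x, hx, hxb⟩ : ∃ x : ℝ, q < x ∧ ∀ M : ℕ, x ^ (M + 1) ≤ ‖T (2 * (M + 1))‖ := by
    have hn : ∀ M : ℕ, ‖T (2 * (M + 1))‖ = (α ^ 2) ^ (M + 1) + (β ^ 2) ^ (M + 1) := by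
      intro M
      rw [show 2 * (M + 1) = 2 * M + 2 by ring, (hT (2 * M)).2, norm_neg, Complex.norm_real,
        ← pow_mul, ← pow_mul, show 2 * (M + 1) = 2 * M + 2 by ring, Real.norm_of_nonneg]
      rw [show 2 * M + 2 = 2 * (M + 1) by ring, pow_mul, pow_mul]
      positivity
    rcases lt_or_ge q (α ^ 2) with h | h
    · exact ⟨_, h, fun M => by rw [hn]; exact le_add_of_nonneg_right (by positivity)⟩
    · exact ⟨β ^ 2, by linarith, fun M => by rw [hn]; exact le_add_of_nonneg_left (by positivity)⟩
  have hq0 : 0 < q := by linarith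
  have hx1 : 1 < x / q := (one_lt_div hq0).2 hx
  obtain ⟨N, hN⟩ := pow_unbounded_of_one_lt (q * (5 * q + 1) + 1) hx1
  have h3 : (x / q) ^ N ≤ (x / q) ^ (N + 2 + 1) := pow_le_pow_right₀ hx1.le (by omega)
  have h4 := (hxb (N + 2)).trans (hb (N + 2) (by omega))
  have h5 : (1 : ℝ) ≤ q ^ (N + 2 + 1) := one_le_pow₀ hq
  have h6 : (x / q) ^ (N + 2 + 1) ≤ q * (5 * q + 1) + 1 := by
    rw [div_pow, div_le_iff₀ (by positivity)]
    nlinarith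
  linarith

/-- **Reality and bound for Evans sums.** For every finite field `F_q`, every nontrivial
additive character `ψ` and every multiplicative character `χ`, the Evans sum
`S(χ) = −(1/√q) ∑_{x ∈ F_q^×} χ(x) ψ(x − x⁻¹)` is real and satisfies `|S(χ)| ≤ 2`. -/
theorem evansSum_real_and_bounded
    {F : Type*} [Field F] [Fintype F] (ψ : AddChar F ℂ) (hψ : ψ ≠ 1)
    (χ : Fˣ →* ℂˣ) :
    (starRingEnd ℂ) (evansSum ψ χ) = evansSum ψ χ ∧ ‖evansSum ψ χ‖ ≤ 2 := by
  set S := ∑ x : Fˣ, (χ x : ℂ) * ψ ((x : F) - (x : F)⁻¹) with hS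
  have hχ : ∀ x : Fˣ, (starRingEnd ℂ) (χ x : ℂ) = (χ x⁻¹ : ℂ) := by
    intro x
    have hn : ‖(χ x : ℂ)‖ = 1 := by
      refine Complex.norm_eq_one_of_pow_eq_one (n := Fintype.card Fˣ) ?_ Fintype.card_ne_zero
      rw [← Units.val_pow_eq_pow_val, ← map_pow, pow_card_eq_one, map_one, Units.val_one]
    rw [map_inv, Units.val_inv_eq_inv_val, Complex.inv_eq_conj hn]
  have hreal : (starRingEnd ℂ) S = S := by
    rw [hS, map_sum, ← Equiv.sum_comp (Equiv.inv Fˣ)]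
    refine Finset.sum_congr rfl fun x _ => ?_
    rw [map_mul, Equiv.inv_apply, hχ, inv_inv, ← AddChar.map_neg_eq_conj]
    congr 2
    rw [Units.val_inv_eq_inv_val, inv_inv]
    ring
  have hT1 : evansT ψ (MulChar.ofUnitHom χ) 1 = S := by
    rw [← evansT_eq (K := F) ψ _ 1 (Module.finrank_self F)]
    symm
    refine Finset.sum_of_injOn (fun x : Fˣ => (x : F)) (fun x _ y _ h => Units.ext h) (by simp) ?_ ?_
    · intro x _ hx
      have : x = 0 := by
        by_contra h
        exact hx ⟨Units.mk0 x h, by simp⟩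
      subst this
      rw [Algebra.norm_zero, MulChar.map_zero, zero_mul]
    · intro x _
      simp [Algebra.norm_self, Algebra.trace_self]
  obtain ⟨s, hs⟩ := Complex.conj_eq_iff_real.1 hreal
  have hq1 : (1 : ℝ) ≤ Fintype.card F := by exact_mod_cast Fintype.card_pos
  have hbound : s ^ 2 ≤ 4 * (Fintype.card F : ℝ) := by
    refine real_root_bound _ s hq1 (evansT ψ (MulChar.ofUnitHom χ)) (hT1.trans hs) ?_ ?_ ?_
    · exact_mod_cast evansT_two ψ hψ _
    · intro n; exact_mod_cast evansT_rec ψ hψ _ n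
    · intro M hM; exact evansT_bound ψ hψ _ M hM
  have hev : evansSum ψ χ = ((-(1 / Real.sqrt (Fintype.card F)) * s : ℝ) : ℂ) := by
    rw [evansSum, ← hS, hs]; push_cast; rfl
  rw [hev]
  refine ⟨Complex.conj_ofReal _, ?_⟩
  rw [Complex.norm_real, Real.norm_eq_abs, abs_mul, abs_neg, abs_of_nonneg (by positivity),
    one_div_mul_eq_div, div_le_iff₀ (Real.sqrt_pos.2 (by linarith))]
  apply abs_le_of_sq_le_sq
  · rw [mul_pow, Real.sq_sqrt (by linarith)]; linarith
  · positivity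
end

section
/- Reality and bound for Rudnick sums: For every finite field F_q of odd characteristic with q elements, every nontrivial additive character ψ : (F_q,+) → ℂˣ and every nontrivial multiplicative character χ : F_q^× → ℂˣ, the Rudnick sum E(χ) = −(1/√q) Σ_{x ∈ F_q \ {0,1}} χ(x) ψ((x+1)/(x−1)) is a real number satisfying |E(χ)| ≤ 2. -/
open Finset
open scoped Classical

/-- The Rudnick sum `E(χ) = −(1/√q) ∑_{x ∈ F_q, x ≠ 0, 1} χ(x) ψ((x+1)/(x−1))`. -/
noncomputable def rudnickSum {F : Type*} [Field F] [Fintype F]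
    (ψ : AddChar F ℂ) (χ : Fˣ →* ℂˣ) : ℂ :=
  -(1 / (Real.sqrt (Fintype.card F) : ℂ)) *
    ∑ x ∈ Finset.univ.filter (fun x : Fˣ => (x : F) ≠ 1),
      (χ x : ℂ) * ψ (((x : F) + 1) / ((x : F) - 1))

set_option linter.unusedSectionVars false

namespace Rud

/-- `π = X^(q-1) - 1`. -/
noncomputable def pol (F : Type*) [Field F] [Fintype F] : Polynomial F :=
  Polynomial.X ^ (Fintype.card F - 1) - 1

/-- The plane curve `π (W^q - W) = 2 X^(q-1)`. -/
noncomputable def Phi (F : Type*) [Field F] [Fintype F] : Polynomial (Polynomial F) :=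
  Polynomial.C (pol F) * (Polynomial.X ^ (Fintype.card F) - Polynomial.X)
    - Polynomial.C (2 * Polynomial.X ^ (Fintype.card F - 1))

section curve
variable {F : Type*} [Field F] [Fintype F]

lemma two_le_card : 2 ≤ Fintype.card F := Fintype.one_lt_card

lemma pol_ne : pol F ≠ 0 := by
  have h : 0 < Fintype.card F - 1 := by have := two_le_card (F := F); omega
  exact Polynomial.X_pow_sub_C_ne_zero h 1

lemma pol_natDegree : (pol F).natDegree = Fintype.card F - 1 := by
  exact Polynomial.natDegree_X_pow_sub_C (r := (1 : F))

lemma pol_eval_one : (pol F).eval 1 = 0 := by simp [pol]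

lemma pol_deriv_one : (pol F).derivative.eval 1 = -1 := by
  have h := two_le_card (F := F)
  simp [pol, Polynomial.derivative_X_pow]
  rw [Nat.cast_sub (by omega)]
  simp

lemma Phi_natDegree_lead : (Phi F).natDegree = Fintype.card F ∧ (Phi F).leadingCoeff = pol F := by
  have h := two_le_card (F := F)
  have hd : (Phi F).natDegree ≤ Fintype.card F := by
    unfold Phi
    compute_degree
    omega
  have hc : (Phi F).coeff (Fintype.card F) = pol F := by
    have h1 : (1 : ℕ) ≠ Fintype.card F := by omega
    have h0 : Fintype.card F ≠ 0 := by omega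
    rw [Phi, Polynomial.coeff_sub, Polynomial.coeff_C_mul, Polynomial.coeff_C_of_ne_zero h0]
    simp [Polynomial.coeff_X, h1]
  have := Polynomial.natDegree_eq_of_le_of_coeff_ne_zero hd (by rw [hc]; exact pol_ne)
  exact ⟨this, by rw [Polynomial.leadingCoeff, this, hc]⟩

lemma Phi_coeff_zero : (Phi F).coeff 0 = -(2 * Polynomial.X ^ (Fintype.card F - 1)) := by
  have h := two_le_card (F := F)
  have h0 : (0 : ℕ) ≠ Fintype.card F := by omega
  rw [Phi, Polynomial.coeff_sub, Polynomial.coeff_C_mul, Polynomial.coeff_C_zero]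
  simp [Polynomial.coeff_X_pow, h0]

lemma Phi_irreducible (h2 : (2 : F) ≠ 0) : Irreducible (Phi F) := by
  have hq := two_le_card (F := F)
  obtain ⟨hd, hl⟩ := Phi_natDegree_lead (F := F)
  have key : ∀ g h : Polynomial (Polynomial F), Phi F = g * h → g.natDegree = 0 → IsUnit g := by
    intro g h hgh hg
    obtain ⟨c, rfl⟩ := Polynomial.natDegree_eq_zero.mp hg
    have h1 : c ∣ pol F := by
      rw [← hl, Polynomial.leadingCoeff, hgh, Polynomial.coeff_C_mul]
      exact dvd_mul_right _ _
    have h3 : c ∣ -(2 * Polynomial.X ^ (Fintype.card F - 1)) := by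
      rw [← Phi_coeff_zero, hgh, Polynomial.coeff_C_mul]
      exact dvd_mul_right _ _
    have h4 : c ∣ Polynomial.C (-2 : F) := by
      have := dvd_add (h1.mul_left 2) h3
      convert this using 1
      rw [pol]
      simp only [map_neg, Polynomial.C_ofNat]
      ring
    have h5 : IsUnit (Polynomial.C (-2 : F)) := by
      rw [Polynomial.isUnit_C]; simpa using h2
    exact Polynomial.isUnit_C.mpr (isUnit_of_dvd_unit h4 h5)
  refine ⟨fun hu => ?_, ?_⟩
  · have := Polynomial.natDegree_eq_zero_of_isUnit hu
    omega
  · intro g h hgh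
    by_cases hg : g.natDegree = 0
    · exact Or.inl (key g h hgh hg)
    by_cases hh : h.natDegree = 0
    · exact Or.inr (key h g (by rw [hgh, mul_comm]) hh)
    exfalso
    let e := Polynomial.evalRingHom (1 : F)
    have hm : g.map e * h.map e = Polynomial.C (-2 : F) := by
      rw [← Polynomial.map_mul, ← hgh]
      simp [Phi, e, pol_eval_one]
    have hu : IsUnit (g.map e * h.map e) := by
      rw [hm, Polynomial.isUnit_C]; simpa using h2
    have hgu := Polynomial.natDegree_eq_zero_of_isUnit (isUnit_of_mul_isUnit_left hu)
    have hhu := Polynomial.natDegree_eq_zero_of_isUnit (isUnit_of_mul_isUnit_right hu)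
    have hg0 : (g.leadingCoeff).eval 1 = 0 := by
      have : (g.map e).coeff g.natDegree = 0 :=
        Polynomial.coeff_eq_zero_of_natDegree_lt (by omega)
      simpa [Polynomial.coeff_map, e] using this
    have hh0 : (h.leadingCoeff).eval 1 = 0 := by
      have : (h.map e).coeff h.natDegree = 0 :=
        Polynomial.coeff_eq_zero_of_natDegree_lt (by omega)
      simpa [Polynomial.coeff_map, e] using this
    have h6 := pol_deriv_one (F := F)
    rw [← hl, hgh, Polynomial.leadingCoeff_mul, Polynomial.derivative_mul] at h6
    simp [hg0, hh0] at h6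

lemma exists_series :
    ∃ w : PowerSeries F, ((pol F : Polynomial F) : PowerSeries F) * (w ^ Fintype.card F - w)
      = 2 * PowerSeries.X ^ (Fintype.card F - 1) := by
  have hq := two_le_card (F := F)
  set I : Ideal (PowerSeries F) := Ideal.span {PowerSeries.X}
  have hu : IsUnit ((pol F : Polynomial F) : PowerSeries F) := by
    rw [PowerSeries.isUnit_iff_constantCoeff]
    have : (0 : ℕ) ≠ Fintype.card F - 1 := by omega
    simp [pol, this.symm]
  obtain ⟨p, hp⟩ := hu
  set U : PowerSeries F := ((p⁻¹ : (PowerSeries F)ˣ) : PowerSeries F) * (2 * PowerSeries.X ^ (Fintype.card F - 1))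
  have hI : HenselianRing (PowerSeries F) I := inferInstance
  have hc0 : ((Fintype.card F : ℕ) : PowerSeries F) = 0 := by
    have : ((Fintype.card F : ℕ) : PowerSeries F) = PowerSeries.C ((Fintype.card F : ℕ) : F) := by
      rw [map_natCast]
    rw [this, FiniteField.cast_card_eq_zero, map_zero]
  have hmon : (Polynomial.X ^ Fintype.card F - Polynomial.X - Polynomial.C U :
      Polynomial (PowerSeries F)).Monic := by
    rw [sub_sub]
    apply Polynomial.monic_X_pow_sub
    compute_degree
    exact_mod_cast hq
  obtain ⟨w, hw, -⟩ := HenselianRing.is_henselian (I := I) _ hmon 0 (by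
      simp only [Polynomial.eval_sub, Polynomial.eval_pow, Polynomial.eval_X, Polynomial.eval_C]
      rw [zero_pow (by omega)]
      rw [Ideal.mem_span_singleton]
      simp only [sub_zero, zero_sub, dvd_neg]
      exact Dvd.dvd.mul_left (Dvd.dvd.mul_left (dvd_pow_self _ (show Fintype.card F - 1 ≠ 0 by omega)) _) _) (by
      simp only [Polynomial.derivative_sub, Polynomial.derivative_X_pow, Polynomial.derivative_X,
        Polynomial.derivative_C, hc0, Polynomial.C_0]
      refine IsUnit.map (Ideal.Quotient.mk I) ?_
      simp)
  refine ⟨w, ?_⟩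
  have hw' : w ^ Fintype.card F - w = U := by
    rw [Polynomial.IsRoot] at hw
    simp at hw
    exact sub_eq_zero.mp hw
  rw [hw', ← hp]
  simp [U]

/-- Substituting `w`. -/
noncomputable def th (w : PowerSeries F) : Polynomial (Polynomial F) →+* PowerSeries F :=
  Polynomial.eval₂RingHom (Polynomial.coeToPowerSeries.ringHom) w

lemma th_C (w : PowerSeries F) (p : Polynomial F) :
    th w (Polynomial.C p) = (p : PowerSeries F) := by
  simp [th]

lemma th_X (w : PowerSeries F) : th w Polynomial.X = w := by
  simp [th]

lemma coe_two_X_pow (n : ℕ) : ((2 * Polynomial.X ^ n : Polynomial F) : PowerSeries F)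
    = 2 * PowerSeries.X ^ n := by
  rw [Polynomial.coe_mul, Polynomial.coe_pow, Polynomial.coe_X]
  congr 1
  exact map_ofNat (Polynomial.coeToPowerSeries.ringHom (R := F)) 2

lemma th_ker (h2 : (2 : F) ≠ 0) (w : PowerSeries F)
    (hw : ((pol F : Polynomial F) : PowerSeries F) * (w ^ Fintype.card F - w)
      = 2 * PowerSeries.X ^ (Fintype.card F - 1)) (H : Polynomial (Polynomial F))
    (hH : th w H = 0) : Phi F ∣ H := by
  have hirr := Phi_irreducible h2
  obtain ⟨hd, hl⟩ := Phi_natDegree_lead (F := F)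
  have hq := two_le_card (F := F)
  have hprim : (Phi F).IsPrimitive := hirr.isPrimitive (by omega)
  let K := FractionRing (Polynomial F)
  let M := FractionRing (PowerSeries F)
  let g : Polynomial F →+* M := (algebraMap (PowerSeries F) M).comp Polynomial.coeToPowerSeries.ringHom
  have hg : Function.Injective g :=
    (IsFractionRing.injective (PowerSeries F) M).comp (Polynomial.coe_injective F)
  let gl : K →+* M := IsFractionRing.lift hg
  have hgl : gl.comp (algebraMap (Polynomial F) K) = g := by
    ext x <;> simp [gl]
  have hev : ∀ G : Polynomial (Polynomial F),
      (G.map (algebraMap (Polynomial F) K)).eval₂ gl (algebraMap _ M w)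
        = algebraMap _ M (th w G) := by
    intro G
    rw [Polynomial.eval₂_map, hgl]
    simp only [th, Polynomial.coe_eval₂RingHom, g]
    rw [Polynomial.hom_eval₂]
  have hPhi : th w (Phi F) = 0 := by
    rw [Phi, map_sub, map_mul, th_C, th_C, map_sub, map_pow, th_X, hw, coe_two_X_pow, sub_self]
  have hirrK := (hprim.irreducible_iff_irreducible_map_fraction_map (K := K)).mp hirr
  rcases (EuclideanDomain.dvd_or_coprime _ (H.map (algebraMap (Polynomial F) K)) hirrK).symm with hc | hdv
  · exfalso
    obtain ⟨a, b, hab⟩ := hc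
    have := congrArg (Polynomial.eval₂ gl (algebraMap _ M w)) hab
    rw [Polynomial.eval₂_add, Polynomial.eval₂_mul, Polynomial.eval₂_mul, hev, hev, hPhi, hH] at this
    simp at this
  · exact hprim.dvd_of_fraction_map_dvd_fraction_map hdv

end curve
end Rud

set_option linter.unusedSectionVars false

namespace Rud
section spaces
variable {F : Type*} [Field F] [Fintype F]

/-- The hypothesis that `w` parametrizes the curve. -/
def Good (w : PowerSeries F) : Prop :=
  ((pol F : Polynomial F) : PowerSeries F) * (w ^ Fintype.card F - w)
      = 2 * PowerSeries.X ^ (Fintype.card F - 1)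

/-- `π` as a power series. -/
noncomputable def ps (F : Type*) [Field F] [Fintype F] : PowerSeries F :=
  ((pol F : Polynomial F) : PowerSeries F)

lemma ps_eq : ps F = PowerSeries.X ^ (Fintype.card F - 1) - 1 := by
  simp [ps, pol]

lemma ps_ne : ps F ≠ 0 := by
  intro h
  exact pol_ne (F := F) (by rwa [ps, Polynomial.coe_eq_zero_iff] at h)

/-- The monomials `X^l w^j`. -/
noncomputable def fam (w : PowerSeries F) (d : ℕ) (x : Fin d × Fin (Fintype.card F)) :
    PowerSeries F := PowerSeries.X ^ (x.1 : ℕ) * w ^ (x.2 : ℕ)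

/-- Span of the monomials with `l < d`, `j < q`. -/
noncomputable def U (w : PowerSeries F) (d : ℕ) : Submodule F (PowerSeries F) :=
  Submodule.span F (Set.range (fam w d))

lemma mem_U {w : PowerSeries F} {d l j : ℕ} (hl : l < d) (hj : j < Fintype.card F) :
    PowerSeries.X ^ l * w ^ j ∈ U w d :=
  Submodule.subset_span ⟨(⟨l, hl⟩, ⟨j, hj⟩), rfl⟩

lemma U_ind {w : PowerSeries F} {d : ℕ} {S : Submodule F (PowerSeries F)}
    (T : PowerSeries F →ₗ[F] PowerSeries F)
    (h : ∀ l j : ℕ, l < d → j < Fintype.card F → T (PowerSeries.X ^ l * w ^ j) ∈ S)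
    {f : PowerSeries F} (hf : f ∈ U w d) : T f ∈ S := by
  have : U w d ≤ S.comap T := by
    rw [U, Submodule.span_le]
    rintro _ ⟨⟨l, j⟩, rfl⟩
    exact h l j l.2 j.2
  exact this hf

lemma U_mono {w : PowerSeries F} {d e : ℕ} (h : d ≤ e) : U w d ≤ U w e := by
  intro f hf
  exact U_ind LinearMap.id (fun l j hl hj => mem_U (by omega) hj) hf

lemma X_mul_U {w : PowerSeries F} {d : ℕ} (n : ℕ) {f : PowerSeries F} (hf : f ∈ U w d) :
    PowerSeries.X ^ n * f ∈ U w (d + n) := by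
  refine U_ind (LinearMap.mulLeft F (PowerSeries.X ^ n)) (fun l j hl hj => ?_) hf
  rw [LinearMap.mulLeft_apply, ← mul_assoc, ← pow_add]
  exact mem_U (by omega) hj

lemma ps_mul_U {w : PowerSeries F} {d : ℕ} {f : PowerSeries F} (hf : f ∈ U w d) :
    ps F * f ∈ U w (d + (Fintype.card F - 1)) := by
  rw [ps_eq, sub_mul, one_mul]
  exact Submodule.sub_mem _ (X_mul_U _ hf) (U_mono (by omega) hf)

lemma w_mul_U {w : PowerSeries F} (hw : Good w) {d : ℕ} {f : PowerSeries F} (hf : f ∈ U w d) :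
    ps F * w * f ∈ U w (d + (Fintype.card F - 1)) := by
  have hq := two_le_card (F := F)
  refine U_ind (LinearMap.mulLeft F (ps F * w)) (fun l j hl hj => ?_) hf
  rw [LinearMap.mulLeft_apply]
  rcases lt_or_eq_of_le (Nat.succ_le_of_lt hj) with h | h
  · have := ps_mul_U (mem_U (w := w) hl h)
    convert this using 1
    rw [Nat.succ_eq_add_one, pow_succ]; ring
  · have h1 : ps F * w * (PowerSeries.X ^ l * w ^ j)
        = ps F * (PowerSeries.X ^ l * w ^ 1)
          + (2 : F) • (PowerSeries.X ^ (l + (Fintype.card F - 1)) * w ^ 0) := by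
      have h3 : ps F * w ^ (j + 1) = ps F * w + 2 * PowerSeries.X ^ (Fintype.card F - 1) := by
        have : ps F * (w ^ Fintype.card F - w) = 2 * PowerSeries.X ^ (Fintype.card F - 1) := hw
        rw [← Nat.succ_eq_add_one, h]
        linear_combination this
      have h4 : (2 : F) • (PowerSeries.X ^ (l + (Fintype.card F - 1)) * w ^ 0)
        = 2 * (PowerSeries.X ^ (l + (Fintype.card F - 1)) : PowerSeries F) := by
        rw [pow_zero, mul_one, PowerSeries.smul_eq_C_mul, map_ofNat]
      rw [h4, pow_add]
      linear_combination PowerSeries.X ^ l * h3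
    rw [h1]
    exact Submodule.add_mem _ (ps_mul_U (mem_U hl (by omega)))
      (Submodule.smul_mem _ _ (mem_U (by omega) (by omega)))

lemma ps_pow_mul_U {w : PowerSeries F} {d : ℕ} (n : ℕ) {f : PowerSeries F} (hf : f ∈ U w d) :
    ps F ^ n * f ∈ U w (d + n * (Fintype.card F - 1)) := by
  induction n with
  | zero => simpa using hf
  | succ n ih =>
    have := ps_mul_U ih
    rw [add_mul, one_mul, ← add_assoc]
    convert this using 1
    ring

lemma wa_pow_mul_U {w : PowerSeries F} (hw : Good w) (a : F) {d : ℕ} (n : ℕ) {f : PowerSeries F}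
    (hf : f ∈ U w d) :
    ps F ^ n * (w + PowerSeries.C a) ^ n * f ∈ U w (d + n * (Fintype.card F - 1)) := by
  induction n with
  | zero => simpa using hf
  | succ n ih =>
    have := Submodule.add_mem _ (w_mul_U hw ih) (Submodule.smul_mem _ a (ps_mul_U ih))
    rw [add_mul, one_mul, ← add_assoc]
    convert this using 1
    rw [PowerSeries.smul_eq_C_mul]; ring

lemma w_pow_mul_U {w : PowerSeries F} (hw : Good w) {d : ℕ} (n : ℕ) {f : PowerSeries F}
    (hf : f ∈ U w d) :
    ps F ^ n * w ^ n * f ∈ U w (d + n * (Fintype.card F - 1)) := by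
  simpa using wa_pow_mul_U hw 0 n hf

lemma mul_U {w : PowerSeries F} (hw : Good w) {a b : ℕ} {f g : PowerSeries F}
    (hf : f ∈ U w a) (hg : g ∈ U w b) :
    ps F ^ (Fintype.card F) * f * g ∈ U w (b + a + Fintype.card F * (Fintype.card F - 1)) := by
  have : (LinearMap.mulLeft F (ps F ^ (Fintype.card F)) ∘ₗ LinearMap.mulRight F g) f ∈
      U w (b + a + Fintype.card F * (Fintype.card F - 1)) := by
    refine U_ind _ (fun l j hl hj => ?_) hf
    rw [LinearMap.comp_apply, LinearMap.mulLeft_apply, LinearMap.mulRight_apply]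
    have h1 := ps_pow_mul_U (Fintype.card F - j) (w_pow_mul_U hw j (X_mul_U l hg))
    have h2 : b + l + j * (Fintype.card F - 1) + (Fintype.card F - j) * (Fintype.card F - 1)
        ≤ b + a + Fintype.card F * (Fintype.card F - 1) := by
      have : j * (Fintype.card F - 1) + (Fintype.card F - j) * (Fintype.card F - 1)
        = Fintype.card F * (Fintype.card F - 1) := by
        rw [← add_mul]; congr 1; omega
      omega
    have h3 := U_mono h2 h1
    convert h3 using 1
    rw [show ps F ^ Fintype.card F = ps F ^ (Fintype.card F - j) * ps F ^ j by
      rw [← pow_add]; congr 1; omega]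
    ring
  simpa [mul_assoc] using this

/-- Polynomial combination of monomials. -/
noncomputable def polyComb {d n : ℕ} (c : Fin d × Fin n → F) : Polynomial (Polynomial F) :=
  ∑ x, Polynomial.monomial (x.2 : ℕ) (Polynomial.monomial (x.1 : ℕ) (c x))

lemma th_monomial (w : PowerSeries F) (l j : ℕ) (a : F) :
    th w (Polynomial.monomial j (Polynomial.monomial l a)) = a • (PowerSeries.X ^ l * w ^ j) := by
  rw [← Polynomial.C_mul_X_pow_eq_monomial, map_mul, map_pow, th_C, th_X,
    ← Polynomial.C_mul_X_pow_eq_monomial, PowerSeries.smul_eq_C_mul]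
  simp [mul_assoc]

lemma th_polyComb (w : PowerSeries F) {d : ℕ} (c : Fin d × Fin (Fintype.card F) → F) :
    th w (polyComb c) = ∑ x, c x • fam w d x := by
  simp [polyComb, map_sum, th_monomial, fam]

lemma polyComb_coeff {d n : ℕ} (c : Fin d × Fin n → F) (l : Fin d) (j : Fin n) :
    ((polyComb c).coeff j).coeff l = c (l, j) := by
  simp only [polyComb, Polynomial.finsetSum_coeff, Polynomial.coeff_monomial]
  rw [Finset.sum_eq_single (l, j)]
  · simp
  · rintro ⟨l', j'⟩ - hne
    by_cases h : (j' : ℕ) = j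
    · by_cases h' : (l' : ℕ) = l
      · exact absurd (Prod.ext (Fin.ext h') (Fin.ext h)) hne
      · simp [h, Polynomial.coeff_monomial, h']
    · simp [h]
  · simp

lemma polyComb_degree {d n : ℕ} (c : Fin d × Fin n → F) : (polyComb c).degree < n := by
  rw [polyComb, ← Polynomial.mem_degreeLT]
  refine Submodule.sum_mem _ fun x _ => ?_
  rw [Polynomial.mem_degreeLT]
  exact lt_of_le_of_lt (Polynomial.degree_monomial_le _ _) (by exact_mod_cast x.2.2)

lemma polyComb_coeff_degree {d n : ℕ} (c : Fin d × Fin n → F) (j : ℕ) :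
    ((polyComb c).coeff j).degree < d := by
  rw [polyComb, Polynomial.finsetSum_coeff, ← Polynomial.mem_degreeLT]
  refine Submodule.sum_mem _ fun x _ => ?_
  rw [Polynomial.mem_degreeLT, Polynomial.coeff_monomial]
  split_ifs
  · exact lt_of_le_of_lt (Polynomial.degree_monomial_le _ _) (by exact_mod_cast x.1.2)
  · simp

lemma small_zero (h2 : (2 : F) ≠ 0) {w : PowerSeries F} (hw : Good w)
    {H : Polynomial (Polynomial F)} (hd : H.degree < Fintype.card F) (h : th w H = 0) : H = 0 := by
  refine Polynomial.eq_zero_of_dvd_of_degree_lt (th_ker h2 w hw H h) ?_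
  obtain ⟨h1, h3⟩ := Phi_natDegree_lead (F := F)
  rw [Polynomial.degree_eq_natDegree (Phi_irreducible h2).ne_zero, h1]
  exact hd

lemma fam_indep (h2 : (2 : F) ≠ 0) {w : PowerSeries F} (hw : Good w) (d : ℕ) :
    LinearIndependent F (fam w d) := by
  rw [Fintype.linearIndependent_iff]
  rintro c hc ⟨l, j⟩
  rw [← th_polyComb] at hc
  have := small_zero h2 hw (polyComb_degree c) hc
  rw [← polyComb_coeff c l j, this]; simp

lemma finrank_U (h2 : (2 : F) ≠ 0) {w : PowerSeries F} (hw : Good w) (d : ℕ) :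
    Module.finrank F (U w d) = d * Fintype.card F := by
  rw [U, finrank_span_eq_card (fam_indep h2 hw d)]
  simp

instance (w : PowerSeries F) (d : ℕ) : FiniteDimensional F (U w d) := by
  unfold U; exact FiniteDimensional.span_of_finite F (Set.finite_range _)

lemma U_repr {w : PowerSeries F} {d : ℕ} {f : PowerSeries F} (hf : f ∈ U w d) :
    ∃ P : Polynomial (Polynomial F), P.degree < Fintype.card F ∧
      (∀ j, (P.coeff j).degree < d) ∧ th w P = f := by
  rw [U, Submodule.mem_span_range_iff_exists_fun] at hf
  obtain ⟨c, rfl⟩ := hf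
  exact ⟨polyComb c, polyComb_degree c, polyComb_coeff_degree c, th_polyComb w c⟩

lemma order_bound (h2 : (2 : F) ≠ 0) {w : PowerSeries F} (hw : Good w) {a N : ℕ}
    {f : PowerSeries F} (hf : f ∈ U w a) (hN : PowerSeries.X ^ N ∣ f)
    (hlt : (a + Fintype.card F * (Fintype.card F - 1)) * Fintype.card F < N) : f = 0 := by
  by_contra hne
  have hq := two_le_card (F := F)
  set q := Fintype.card F with hqdef
  set B := a + q * (q - 1) with hB
  -- source: U_N × polynomials of degree < N
  let T1 : PowerSeries F →ₗ[F] PowerSeries F := LinearMap.mulLeft F (ps F ^ q * f)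
  let T2 : (Fin N → F) →ₗ[F] PowerSeries F :=
    Fintype.linearCombination F (fun i : Fin N => (PowerSeries.X ^ (i : ℕ) : PowerSeries F))
  let T : (U w N × (Fin N → F)) →ₗ[F] PowerSeries F := (T1 ∘ₗ (U w N).subtype).coprod T2
  have hTapp : ∀ x, T x = ps F ^ q * f * (x.1 : PowerSeries F) + T2 x.2 := fun x => by
    simp [T, T1, mul_assoc]
  have hT2 : ∀ (c : Fin N → F) (i : Fin N), PowerSeries.coeff (i : ℕ) (T2 c) = c i := by
    intro c i
    simp only [T2, Fintype.linearCombination_apply, map_sum, PowerSeries.coeff_smul,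
      PowerSeries.coeff_X_pow, smul_eq_mul]
    rw [Finset.sum_eq_single i]
    · simp
    · intro b _ hb
      have : (i : ℕ) ≠ b := fun h => hb (Fin.ext h.symm)
      simp [this]
    · simp
  have hmem : ∀ x, T x ∈ U w (N + B) := by
    intro x
    rw [hTapp]
    refine Submodule.add_mem _ ?_ ?_
    · have := mul_U hw hf x.1.2
      rw [hB, ← add_assoc]
      exact this
    · simp only [T2, Fintype.linearCombination_apply]
      refine Submodule.sum_mem _ fun i _ => Submodule.smul_mem _ _ ?_
      have := mem_U (w := w) (d := N + B) (l := i) (j := 0) (by omega) (by omega)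
      simpa using this
  have hinj : Function.Injective (T.codRestrict _ hmem) := by
    rw [← LinearMap.ker_eq_bot, LinearMap.ker_eq_bot']
    rintro ⟨g, c⟩ hx
    have hx' : T (g, c) = 0 := by simpa using congrArg Subtype.val hx
    rw [hTapp] at hx'
    have hdiv : PowerSeries.X ^ N ∣ ps F ^ q * f * (g : PowerSeries F) :=
      Dvd.dvd.mul_right (Dvd.dvd.mul_left hN _) _
    have hc : c = 0 := by
      ext i
      have h1 := congrArg (PowerSeries.coeff (i : ℕ)) hx'
      rw [map_add, hT2, PowerSeries.X_pow_dvd_iff.mp hdiv i i.2] at h1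
      simpa using h1
    subst hc
    simp only [map_zero, add_zero, mul_eq_zero, pow_eq_zero_iff', ps_ne, hne] at hx'
    simp at hx'
    simp [hx']
  have := LinearMap.finrank_le_finrank_of_injective hinj
  rw [Module.finrank_prod, finrank_U h2 hw, finrank_U h2 hw] at this
  simp at this
  rw [add_mul, ← hqdef] at this
  omega

end spaces
end Rud

set_option linter.unusedSectionVars false

namespace Rud
section step
variable {F : Type*} [Field F] [Fintype F]

lemma exists_frob (F : Type*) [Field F] [Fintype F] (R : Type*) [CommRing R] [Algebra F R] (m : ℕ) :
    ∃ φ : R →ₐ[F] R, ∀ x, φ x = x ^ (Fintype.card F ^ m) := by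
  refine ⟨(FiniteField.frobeniusAlgHom F R) ^ m, fun x => ?_⟩
  rw [AlgHom.coe_pow, FiniteField.coe_frobeniusAlgHom, pow_iterate]

lemma indep_pow (h2 : (2 : F) ≠ 0) {w : PowerSeries F} (hw : Good w) (m s : ℕ)
    (hs : (s + Fintype.card F * (Fintype.card F - 1)) * Fintype.card F < Fintype.card F ^ m)
    (f : Fin s × Fin (Fintype.card F) → PowerSeries F)
    (hf : ∑ x, fam w s x * f x ^ (Fintype.card F ^ m) = 0) : ∀ x, f x = 0 := by
  obtain ⟨φ, hφ⟩ := exists_frob F (PowerSeries F) m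
  set r := Fintype.card F ^ m with hr
  have key : ∀ n, ∀ x, PowerSeries.X ^ n ∣ f x := by
    intro n
    induction n with
    | zero => intro x; simp
    | succ n ih =>
      choose g hg using ih
      have h1 : ∑ x, fam w s x * g x ^ r = 0 := by
        have : (PowerSeries.X ^ n) ^ r * ∑ x, fam w s x * g x ^ r = 0 := by
          rw [← hf, Finset.mul_sum]
          refine Finset.sum_congr rfl fun x _ => ?_
          rw [hg x, mul_pow]; ring
        have hX : ((PowerSeries.X : PowerSeries F) ^ n) ^ r ≠ 0 :=
          pow_ne_zero _ (pow_ne_zero _ PowerSeries.X_ne_zero)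
        exact (mul_eq_zero.mp this).resolve_left hX
      let γ : Fin s × Fin (Fintype.card F) → F := fun x => PowerSeries.constantCoeff (g x)
      have h3 : ∀ x, ∃ h, g x = PowerSeries.X * h + PowerSeries.C (γ x) := fun x =>
        ⟨_, PowerSeries.eq_X_mul_shift_add_const (g x)⟩
      choose h hh using h3
      have h4 : ∀ x, g x ^ r = PowerSeries.X ^ r * h x ^ r + PowerSeries.C (γ x) := by
        intro x
        rw [← hφ, hh x, map_add, map_mul, hφ, hφ]
        congr 1
        exact φ.commutes (γ x)
      have h5 : ∑ x, γ x • fam w s x = PowerSeries.X ^ r * (- ∑ x, fam w s x * h x ^ r) := by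
        have : ∑ x, γ x • fam w s x = ∑ x, fam w s x * g x ^ r
            - PowerSeries.X ^ r * ∑ x, fam w s x * h x ^ r := by
          rw [Finset.mul_sum, ← Finset.sum_sub_distrib]
          refine Finset.sum_congr rfl fun x _ => ?_
          rw [h4, PowerSeries.smul_eq_C_mul]; ring
        rw [this, h1]; ring
      have h6 : ∑ x, γ x • fam w s x = 0 := by
        refine order_bound h2 hw (a := s) (N := r) ?_ ⟨_, h5⟩ hs
        exact Submodule.sum_mem _ fun x _ => Submodule.smul_mem _ _
          (Submodule.subset_span ⟨x, rfl⟩)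
      have h7 := Fintype.linearIndependent_iff.mp (fam_indep h2 hw s) γ h6
      intro x
      rw [hg x, hh x, h7 x, map_zero, add_zero, pow_succ]
      exact mul_dvd_mul_left _ (dvd_mul_right _ _)
  intro x
  ext n
  rw [PowerSeries.X_pow_dvd_iff.mp (key (n + 1) x) n (by omega)]
  simp

/-- Evaluation at a point. -/
noncomputable def ev {Ω : Type*} [Field Ω] [Algebra F Ω] (v w : Ω) :
    Polynomial (Polynomial F) →+* Ω :=
  Polynomial.eval₂RingHom (Polynomial.aeval v).toRingHom w

lemma ev_C {Ω : Type*} [Field Ω] [Algebra F Ω] (v w : Ω) (p : Polynomial F) :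
    ev v w (Polynomial.C p) = Polynomial.aeval v p := by
  simp [ev]

lemma ev_X {Ω : Type*} [Field Ω] [Algebra F Ω] (v w : Ω) :
    ev (F := F) v w Polynomial.X = w := by
  simp [ev]

/-- Terms of the vanishing polynomial. -/
noncomputable def hT (r : ℕ) (c α : F) (i j i' j' : ℕ) : Polynomial (Polynomial F) :=
  Polynomial.C (Polynomial.X ^ (r * i) * (Polynomial.C c * Polynomial.X) ^ i') *
    (Polynomial.X ^ (r * j) * (Polynomial.X + Polynomial.C (Polynomial.C α)) ^ j')

/-- Terms of the auxiliary polynomial. -/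
noncomputable def gT (F : Type*) [Field F] (r i j i' j' : ℕ) : Polynomial (Polynomial F) :=
  Polynomial.C (Polynomial.X ^ (i + r * i')) * Polynomial.X ^ (j + r * j')

lemma th_hT (w : PowerSeries F) (r : ℕ) (c α : F) (i j i' j' : ℕ) :
    th w (hT r c α i j i' j') = PowerSeries.C (c ^ i') * (w ^ (r * j) *
      ((w + PowerSeries.C α) ^ j' * (PowerSeries.X ^ (r * i + i')))) := by
  simp only [hT, map_mul, map_pow, map_add, th_C, th_X, Polynomial.coe_mul, Polynomial.coe_pow,
    Polynomial.coe_X, Polynomial.coe_C]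
  ring

lemma th_gT (w : PowerSeries F) (r : ℕ) (i j i' j' : ℕ) :
    th w (gT F r i j i' j') = PowerSeries.X ^ (i + r * i') * w ^ (j + r * j') := by
  simp only [gT, map_mul, map_pow, th_C, th_X, Polynomial.coe_pow, Polynomial.coe_X]

lemma ev_gT {Ω : Type*} [Field Ω] [Algebra F Ω] (v w : Ω) (r : ℕ) (c α : F) (i j i' j' : ℕ)
    (hv : v ^ (r * r) = algebraMap F Ω c * v) (hw : w ^ (r * r) = w + algebraMap F Ω α) :
    (ev v w (gT F r i j i' j')) ^ r = ev v w (hT r c α i j i' j') := by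
  simp only [gT, hT, map_mul, map_pow, map_add, ev_C, ev_X, Polynomial.aeval_X, Polynomial.aeval_C]
  rw [← hv, ← hw]
  ring

lemma term_mem {w : PowerSeries F} (hw : Good w) (c α : F) {D B l n n' : ℕ} (hn : n + n' ≤ D)
    (hB : l + 1 + D * (Fintype.card F - 1) ≤ B) :
    ps F ^ D * (PowerSeries.C c * (w ^ n * ((w + PowerSeries.C α) ^ n' * PowerSeries.X ^ l)))
      ∈ U w B := by
  have h0 : (PowerSeries.X ^ l : PowerSeries F) ∈ U w (l + 1) := by
    have := mem_U (w := w) (l := l) (d := l + 1) (j := 0) (by omega)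
      (by have := two_le_card (F := F); omega)
    simpa using this
  have h1 := Submodule.smul_mem _ c
    (ps_pow_mul_U (D - (n + n')) (w_pow_mul_U hw n (wa_pow_mul_U hw α n' h0)))
  have h2 := U_mono (w := w) (e := B) (by
    have : n' * (Fintype.card F - 1) + n * (Fintype.card F - 1)
      + (D - (n + n')) * (Fintype.card F - 1) = D * (Fintype.card F - 1) := by
      rw [← add_mul, ← add_mul]; congr 1; omega
    omega) h1
  convert h2 using 1
  rw [PowerSeries.smul_eq_C_mul, show ps F ^ D = ps F ^ (D - (n + n')) * ps F ^ n * ps F ^ n' by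
    rw [← pow_add, ← pow_add]; congr 1; omega]
  ring

lemma arith1 (q s : ℕ) (hq : 2 ≤ q) (hs : 1 ≤ s) :
    q ^ 2 * s * (s - 1) + (q * s + q ^ 3 + 1) + q ^ 2 * s * q * (q - 1)
      < s * q * (q * s + q ^ 3 + 1) := by
  obtain ⟨s', rfl⟩ : ∃ s', s = s' + 1 := ⟨s - 1, by omega⟩
  obtain ⟨q', rfl⟩ : ∃ q', q = q' + 2 := ⟨q - 2, by omega⟩
  rw [Nat.add_sub_cancel, show q' + 2 - 1 = q' + 1 by omega]
  ring_nf
  nlinarith [Nat.zero_le (s' * q'), Nat.zero_le (s' * q' ^ 2), Nat.zero_le (s' * q' ^ 3),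
        Nat.zero_le (q' ^ 2), Nat.zero_le (q' ^ 3), Nat.zero_le s']

lemma arith2 (q s : ℕ) (hq : 2 ≤ q) (hs : q ^ 2 ≤ s) :
    (s + q * (q - 1)) * q < q ^ 2 * s := by
  obtain ⟨q', rfl⟩ : ∃ q', q = q' + 2 := ⟨q - 2, by omega⟩
  rw [show q' + 2 - 1 = q' + 1 by omega]
  obtain ⟨k, rfl⟩ : ∃ k, s = (q' + 2) ^ 2 + k := ⟨s - (q' + 2) ^ 2, by omega⟩
  have h5 : ((q' + 2) ^ 2 + k) + (q' + 2) * (q' + 1) < (q' + 2) * ((q' + 2) ^ 2 + k) := by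
    nlinarith [Nat.zero_le (q' * k), Nat.zero_le (q' ^ 2), Nat.zero_le (q' ^ 3)]
  calc _ < ((q' + 2) * ((q' + 2) ^ 2 + k)) * (q' + 2) :=
        Nat.mul_lt_mul_of_pos_right h5 (by omega)
    _ = _ := by ring

lemma arith3 (q s : ℕ) (hq : 2 ≤ q) :
    q * (s + q ^ 2 * s * (q * s + q ^ 3) + q ^ 2 * s * q * (q - 1)) ≤
      q ^ 2 * s * (q ^ 2 * s) + q ^ 2 * s * (q ^ 4 + q ^ 3) := by
  obtain ⟨q', rfl⟩ : ∃ q', q = q' + 2 := ⟨q - 2, by omega⟩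
  rw [show q' + 2 - 1 = q' + 1 by omega]
  have h : s + (q' + 2) ^ 2 * s * (q' + 2) * (q' + 1) ≤ (q' + 2) ^ 2 * s * (q' + 2) ^ 2 := by
    have : s ≤ s * (q' + 2) ^ 3 := Nat.le_mul_of_pos_right _ (by positivity)
    calc _ ≤ s * (q' + 2) ^ 3 + (q' + 2) ^ 2 * s * (q' + 2) * (q' + 1) := by gcongr
      _ = _ := by ring
  calc _ = (q' + 2) ^ 2 * s * ((q' + 2) ^ 2 * s) + (q' + 2) ^ 2 * s * (q' + 2) ^ 4 +
        (q' + 2) * (s + (q' + 2) ^ 2 * s * (q' + 2) * (q' + 1)) := by ring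
    _ ≤ (q' + 2) ^ 2 * s * ((q' + 2) ^ 2 * s) + (q' + 2) ^ 2 * s * (q' + 2) ^ 4 +
        (q' + 2) * ((q' + 2) ^ 2 * s * (q' + 2) ^ 2) := by gcongr
    _ = _ := by ring

set_option maxHeartbeats 1000000 in
theorem stepanov (h2 : (2 : F) ≠ 0) (t : ℕ) (ht : 2 ≤ t) (c α : F) {Ω : Type*} [Field Ω]
    [Algebra F Ω] (r : ℕ) (hr : r = Fintype.card F ^ (t + 2)) (Z : Finset Ω)
    (hZ : ∀ v ∈ Z, v ^ (Fintype.card F - 1) ≠ 1 ∧ v ^ (r * r) = algebraMap F Ω c * v ∧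
      ∃ w : Ω, (v ^ (Fintype.card F - 1) - 1) * (w ^ Fintype.card F - w)
        = 2 * v ^ (Fintype.card F - 1) ∧ w ^ (r * r) = w + algebraMap F Ω α) :
    Fintype.card F * Z.card ≤ r * r + r * (Fintype.card F ^ 4 + Fintype.card F ^ 3) := by
  have hq := two_le_card (F := F)
  obtain ⟨w, hw⟩ := exists_series (F := F)
  replace hw : Good w := hw
  set q := Fintype.card F with hqdef
  set s := q ^ t with hs
  have hrs : r = q ^ 2 * s := by rw [hr, hs]; ring
  have hsq : q ^ 2 ≤ s := Nat.pow_le_pow_right (by omega) ht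
  set b1 := q * s + q ^ 3 + 1 with hb1
  set D := r * q with hD
  set B := r * (s - 1) + b1 + D * (q - 1) with hB
  have hs0 : 1 ≤ s := by nlinarith
  have hqr : q ≤ r := by rw [hrs]; nlinarith
  have hDn : ∀ j j', j < q → j' < q → r * j + j' ≤ D := by
    intro j j' hj hj'
    have : r * j + r ≤ r * q := by
      have := Nat.mul_le_mul_left r (Nat.succ_le_of_lt hj)
      rw [Nat.succ_eq_add_one, mul_add, mul_one] at this
      exact this
    omega
  -- the linear system
  let I := Fin s × Fin q
  let J := Fin b1 × Fin q
  let T : ((I × J) → F) →ₗ[F] PowerSeries F :=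
    Fintype.linearCombination F (fun x : I × J =>
      ps F ^ D * th w (hT r c α x.1.1 x.1.2 x.2.1 x.2.2))
  have hTmem : ∀ b, T b ∈ U w B := by
    intro b
    simp only [T, Fintype.linearCombination_apply]
    refine Submodule.sum_mem _ fun x _ => Submodule.smul_mem _ _ ?_
    rw [th_hT]
    refine term_mem hw _ _ (hDn _ _ x.1.2.2 x.2.2.2) ?_
    have h1 : r * (x.1.1 : ℕ) ≤ r * (s - 1) := Nat.mul_le_mul_left _ (by have := x.1.1.2; omega)
    have h3 := x.2.1.2
    rw [hB, ← hqdef]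
    omega
  have hdim : Module.finrank F (U w B) < Module.finrank F ((I × J) → F) := by
    rw [finrank_U h2 hw, Module.finrank_fintype_fun_eq_card]
    simp only [I, J, Fintype.card_prod, Fintype.card_fin]
    rw [← hqdef]
    have hlt : B < s * q * b1 := by
      rw [hB, hD, hb1, hrs]
      exact arith1 q s hq hs0
    calc B * q < (s * q * b1) * q := Nat.mul_lt_mul_of_pos_right hlt (by omega)
      _ = s * q * (b1 * q) := by ring
  obtain ⟨b, hbker, hb0⟩ : ∃ b, T b = 0 ∧ b ≠ 0 := by
    have := LinearMap.ker_ne_bot_of_finrank_lt (f := T.codRestrict _ hTmem) hdim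
    obtain ⟨b, hb, hb0⟩ := (Submodule.ne_bot_iff _).mp this
    refine ⟨b, ?_, hb0⟩
    simpa using congrArg Subtype.val (LinearMap.mem_ker.mp hb)
  let cc : F → Polynomial (Polynomial F) := fun a => Polynomial.C (Polynomial.C a)
  let H0 : Polynomial (Polynomial F) :=
    ∑ x : I × J, cc (b x) * hT r c α x.1.1 x.1.2 x.2.1 x.2.2
  let G0 : Polynomial (Polynomial F) :=
    ∑ x : I × J, cc (b x) * gT F r x.1.1 x.1.2 x.2.1 x.2.2
  have hthcc : ∀ a, th w (cc a) = PowerSeries.C a := by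
    intro a; simp [cc, th_C]
  have hH0 : th w H0 = 0 := by
    have : ps F ^ D * th w H0 = 0 := by
      rw [← hbker]
      simp only [T, H0, Fintype.linearCombination_apply, map_sum, map_mul, hthcc, Finset.mul_sum,
        PowerSeries.smul_eq_C_mul]
      exact Finset.sum_congr rfl fun x _ => by ring
    exact (mul_eq_zero.mp this).resolve_left (pow_ne_zero _ ps_ne)
  have hPhidvd := th_ker h2 w hw H0 hH0
  have hG0 : th w G0 ≠ 0 := by
    intro h0
    apply hb0
    let f : I → PowerSeries F := fun x => ∑ y : J, b (x, y) • fam w b1 y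
    have h1 : ∑ x, fam w s x * f x ^ (q ^ (t + 2)) = 0 := by
      obtain ⟨φ, hφ⟩ := exists_frob F (PowerSeries F) (t + 2)
      rw [← h0]
      simp only [G0, map_sum, map_mul, hthcc, th_gT]
      conv_rhs => rw [Fintype.sum_prod_type]
      refine Finset.sum_congr rfl fun x _ => ?_
      rw [← hφ]
      simp only [f, map_sum, map_smul]
      rw [Finset.mul_sum]
      refine Finset.sum_congr rfl fun y _ => ?_
      rw [hφ, ← hqdef, ← hr, PowerSeries.smul_eq_C_mul, fam, fam]
      ring
    have h3 := indep_pow h2 hw (t + 2) s (by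
      rw [← hqdef, ← hr, hrs]
      exact arith2 q s hq hsq) f h1
    ext ⟨x, y⟩
    exact Fintype.linearIndependent_iff.mp (fam_indep h2 hw b1) (fun y => b (x, y)) (h3 x) y
  -- reduction of G0
  set B2 := s + r * (b1 - 1) + D * (q - 1) with hB2
  have hG0mem : ps F ^ D * th w G0 ∈ U w B2 := by
    simp only [G0, map_sum, map_mul, hthcc, th_gT]
    rw [Finset.mul_sum]
    refine Submodule.sum_mem _ fun x _ => ?_
    have h1 := term_mem hw (b x) 0 (D := D) (B := B2)
      (l := x.1.1 + r * x.2.1) (n := x.1.2 + r * x.2.2) (n' := 0)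
      (by have := hDn _ _ x.2.2.2 x.1.2.2; omega) (by
        have h1 : r * (x.2.1 : ℕ) ≤ r * (b1 - 1) :=
          Nat.mul_le_mul_left _ (by have := x.2.1.2; omega)
        have := x.1.1.2
        rw [hB2, ← hqdef]
        omega)
    convert h1 using 1
    rw [pow_zero, one_mul]; ring
  obtain ⟨P, hPd, hPc, hPth⟩ := U_repr hG0mem
  have hP0 : P ≠ 0 := by
    rintro rfl
    rw [map_zero] at hPth
    exact mul_ne_zero (pow_ne_zero _ ps_ne) hG0 hPth.symm
  have hPdvd : Phi F ∣ Polynomial.C (pol F) ^ D * G0 - P := by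
    refine th_ker h2 w hw _ ?_
    rw [map_sub, map_mul, map_pow, th_C, hPth, ps, sub_self]
  have hroot : ∀ v ∈ Z, ∀ j, Polynomial.aeval v (P.coeff j) = 0 := by
    intro v hv
    obtain ⟨hv1, hvr, w0, hw0, hw0r⟩ := hZ v hv
    have hpt : ∀ a : F, ev v (w0 + algebraMap F Ω a) P = 0 := by
      intro a
      obtain ⟨φ, hφ⟩ := exists_frob F Ω 1
      obtain ⟨φr, hφr⟩ := exists_frob F Ω (t + 2)
      rw [← hqdef, pow_one] at hφ
      rw [← hqdef, ← hr] at hφr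
      set w1 := w0 + algebraMap F Ω a with hw1
      have e1 : w1 ^ q = w0 ^ q + algebraMap F Ω a := by
        rw [← hφ, hw1, map_add, hφ, AlgHom.commutes]
      have e2 : w1 ^ (r * r) = w1 + algebraMap F Ω α := by
        rw [pow_mul, ← hφr, ← hφr, hw1, map_add, map_add, AlgHom.commutes, AlgHom.commutes,
          hφr, hφr, ← pow_mul, hw0r]
        ring
      have e3 : ev v w1 (Phi F) = 0 := by
        simp only [Phi, map_sub, map_mul, map_pow, ev_C, ev_X, pol, Polynomial.aeval_X, map_one]
        rw [← hqdef, e1, hw1, map_ofNat]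
        linear_combination hw0
      have e4 : ev v w1 H0 = 0 := by
        obtain ⟨k, hk⟩ := hPhidvd
        rw [hk, map_mul, e3, zero_mul]
      have e5 : ev v w1 G0 = 0 := by
        have : (ev v w1 G0) ^ r = 0 := by
          rw [← e4, ← hφr]
          simp only [G0, H0, map_sum, map_mul]
          refine Finset.sum_congr rfl fun x _ => ?_
          rw [hφr (ev v w1 (gT F r _ _ _ _)), ev_gT v w1 r c α _ _ _ _ hvr e2]
          simp [cc, ev_C]
        exact pow_eq_zero_iff (by omega) |>.mp this
      obtain ⟨k, hk⟩ := hPdvd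
      have := congrArg (ev v w1) hk
      rw [map_sub, map_mul, map_mul, e3, e5] at this
      simpa using this
    have hz : P.map (Polynomial.aeval v).toRingHom = 0 := by
      refine Polynomial.eq_zero_of_degree_lt_of_eval_finset_eq_zero
        (Finset.univ.image fun a : F => w0 + algebraMap F Ω a) ?_ ?_
      · rw [Finset.card_image_of_injective]
        · exact lt_of_le_of_lt Polynomial.degree_map_le hPd
        · intro a a' h
          exact (algebraMap F Ω).injective (add_left_cancel h)
      · intro y hy
        obtain ⟨a, -, rfl⟩ := Finset.mem_image.mp hy
        rw [Polynomial.eval_map]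
        exact hpt a
    intro j
    have := congrArg (fun p => Polynomial.coeff p j) hz
    simpa using this
  obtain ⟨j, hj⟩ : ∃ j, P.coeff j ≠ 0 := by
    by_contra h
    push Not at h
    exact hP0 (Polynomial.ext (by simpa using h))
  have hcard : Z.card ≤ B2 := by
    have hm : (P.coeff j).map (algebraMap F Ω) ≠ 0 :=
      (Polynomial.map_ne_zero_iff (algebraMap F Ω).injective).mpr hj
    have h1 : Z.card ≤ ((P.coeff j).map (algebraMap F Ω)).natDegree := by
      refine Polynomial.card_le_degree_of_subset_roots ?_
      intro v hv
      rw [Polynomial.mem_roots hm, Polynomial.IsRoot, Polynomial.eval_map_algebraMap]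
      exact hroot v hv j
    rw [Polynomial.natDegree_map] at h1
    have h3 := (Polynomial.natDegree_lt_iff_degree_lt hj).mpr (hPc j)
    omega
  calc q * Z.card ≤ q * B2 := Nat.mul_le_mul_left _ hcard
    _ ≤ r * r + r * (q ^ 4 + q ^ 3) := by
      have hb : b1 - 1 = q * s + q ^ 3 := by rw [hb1]; rfl
      rw [hB2, hb, hD, hrs]
      exact arith3 q s hq

end step
end Rud

set_option linter.unusedSectionVars false

namespace Rud
section quad
variable {K : Type*} [Field K] [Fintype K]

/-- The summand of the Rudnick sum, extended by zero. -/
noncomputable def lam (ψ : AddChar K ℂ) (χ : Kˣ →* ℂˣ) (x : K) : ℂ :=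
  if x = 1 then 0 else MulChar.ofUnitHom χ x * ψ ((x + 1) / (x - 1))

/-- The two-variable symmetric summand. -/
noncomputable def Lam (ψ : AddChar K ℂ) (χ : Kˣ →* ℂˣ) (t n : K) : ℂ :=
  if n - t + 1 = 0 then 0 else MulChar.ofUnitHom χ n * ψ ((2 * n - 2) / (n - t + 1))

lemma sum_units_eq (f : K → ℂ) (h0 : f 0 = 0) : ∑ x : Kˣ, f x = ∑ x : K, f x := by
  rw [← Finset.sum_subset (Finset.subset_univ (Finset.univ.filter fun x : K => x ≠ 0))]
  · refine Finset.sum_bij (fun (x : Kˣ) _ => (x : K)) ?_ ?_ ?_ ?_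
    · intro a _; simp
    · intro a _ b _ h; exact Units.ext h
    · intro b hb; exact ⟨Units.mk0 b (by simpa using hb), by simp, by simp⟩
    · intro a _; rfl
  · intro x _ hx
    have : x = 0 := by simpa using hx
    rw [this, h0]

lemma rud_eq (ψ : AddChar K ℂ) (χ : Kˣ →* ℂˣ) :
    rudnickSum ψ χ = -(1 / (Real.sqrt (Fintype.card K) : ℂ)) * ∑ x : K, lam ψ χ x := by
  rw [rudnickSum, ← sum_units_eq (lam ψ χ) (by simp [lam, MulChar.map_zero]), Finset.sum_filter]
  congr 1
  refine Finset.sum_congr rfl fun x _ => ?_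
  by_cases h : (x : K) = 1
  · simp [lam, h]
  · simp [lam, h, MulChar.ofUnitHom_coe]

lemma lam_mul (ψ : AddChar K ℂ) (χ : Kˣ →* ℂˣ) (x y : K) :
    lam ψ χ x * lam ψ χ y = Lam ψ χ (x + y) (x * y) := by
  have h : x * y - (x + y) + 1 = (x - 1) * (y - 1) := by ring
  rw [Lam, h]
  by_cases hx : x = 1
  · simp [lam, hx]
  by_cases hy : y = 1
  · simp [lam, hy]
  have hx' := sub_ne_zero.mpr hx
  have hy' := sub_ne_zero.mpr hy
  rw [lam, lam, if_neg hx, if_neg hy, if_neg (mul_ne_zero hx' hy'), map_mul,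
    show (2 * (x * y) - 2) / ((x - 1) * (y - 1)) = (x + 1) / (x - 1) + (y + 1) / (y - 1) by
      field_simp; ring, AddChar.map_add_eq_mul]
  ring

lemma sum_Lam (h2 : (2 : K) ≠ 0) (ψ : AddChar K ℂ) (hψ : ψ ≠ 1) (χ : Kˣ →* ℂˣ) (hχ : χ ≠ 1) :
    ∑ n : K, ∑ t : K, Lam ψ χ t n = Fintype.card K := by
  have hX : MulChar.ofUnitHom χ ≠ (1 : MulChar K ℂ) := by
    intro h
    apply hχ
    ext a
    rw [← MulChar.ofUnitHom_coe, h]; simp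
  have h1 : ∀ n : K, ∑ t : K, Lam ψ χ t n
      = MulChar.ofUnitHom χ n * ((if n = 1 then (Fintype.card K : ℂ) else 0) - 1) := by
    intro n
    have e1 : ∑ t : K, Lam ψ χ t n =
        ∑ k : K, if k = 0 then 0 else MulChar.ofUnitHom χ n * ψ ((2 * n - 2) / k) := by
      refine Fintype.sum_equiv (Equiv.subLeft (n + 1)) _ _ fun t => ?_
      simp only [Lam, Equiv.subLeft_apply]
      rw [show n + 1 - t = n - t + 1 by ring]
    have e2 : (∑ k : K, if k = 0 then 0 else MulChar.ofUnitHom χ n * ψ ((2 * n - 2) / k))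
        = ∑ k : K, if k = 0 then 0 else MulChar.ofUnitHom χ n * ψ (k * (2 * n - 2)) := by
      refine Fintype.sum_equiv (Equiv.inv K) _ _ fun t => ?_
      simp only [Equiv.inv_apply, inv_eq_zero]
      rw [div_eq_inv_mul]
    have e3 : (∑ k : K, if k = 0 then 0 else MulChar.ofUnitHom χ n * ψ (k * (2 * n - 2)))
        = ∑ k : K, (MulChar.ofUnitHom χ n * ψ (k * (2 * n - 2))
          - if k = 0 then MulChar.ofUnitHom χ n else 0) := by
      refine Finset.sum_congr rfl fun k _ => ?_
      by_cases hk : k = 0 <;> simp [hk]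
    rw [e1, e2, e3, Finset.sum_sub_distrib, ← Finset.mul_sum,
      AddChar.sum_mulShift _ (AddChar.IsPrimitive.of_ne_one hψ), mul_sub]
    have : 2 * n - 2 = 0 ↔ n = 1 := by
      rw [show 2 * n - 2 = 2 * (n - 1) by ring, mul_eq_zero, sub_eq_zero]; simp [h2]
    simp [this]
  simp only [h1, mul_sub, Finset.sum_sub_distrib, mul_one]
  rw [MulChar.sum_eq_zero_of_ne_one hX]
  simp

lemma sum_sq (hK : ringChar K ≠ 2) (d : K) (hd : ¬ IsSquare d) (f : K → ℂ) :
    ∑ e : K, f (e ^ 2) + ∑ b : K, f (d * b ^ 2) = 2 * ∑ D : K, f D := by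
  have hd0 : d ≠ 0 := by rintro rfl; exact hd (IsSquare.zero)
  have e1 : ∑ e : K, f (e ^ 2) = ∑ D : K, ((quadraticChar K D + 1 : ℤ) : ℂ) * f D := by
    rw [← Finset.sum_fiberwise (s := Finset.univ) (g := fun e : K => e ^ 2)]
    refine Finset.sum_congr rfl fun D _ => ?_
    rw [Finset.sum_congr rfl (g := fun _ => f D) (by
      intro x hx; rw [(Finset.mem_filter.mp hx).2])]
    rw [Finset.sum_const, nsmul_eq_mul, ← quadraticChar_card_sqrts hK D]
    congr 1
    norm_cast
    congr 1
    ext x; simp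
  have e2 : ∑ b : K, f (d * b ^ 2) = ∑ D : K, ((- quadraticChar K D + 1 : ℤ) : ℂ) * f D := by
    rw [← Finset.sum_fiberwise (s := Finset.univ) (g := fun e : K => d * e ^ 2)]
    refine Finset.sum_congr rfl fun D _ => ?_
    rw [Finset.sum_congr rfl (g := fun _ => f D) (by
      intro x hx; rw [(Finset.mem_filter.mp hx).2])]
    have : - quadraticChar K D = quadraticChar K (D / d) := by
      have h3 : quadraticChar K D = quadraticChar K (D / d) * quadraticChar K d := by
        rw [← map_mul, div_mul_cancel₀ _ hd0]
      rw [h3, quadraticChar_neg_one_iff_not_isSquare.mpr hd]; ring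
    rw [Finset.sum_const, nsmul_eq_mul, this, ← quadraticChar_card_sqrts hK (D / d)]
    congr 1
    norm_cast
    congr 1
    ext x
    simp [eq_div_iff hd0, mul_comm]
  rw [e1, e2, ← Finset.sum_add_distrib, Finset.mul_sum]
  refine Finset.sum_congr rfl fun D _ => ?_
  push_cast; ring

lemma trace_quad (d : K) (z : QuadraticAlgebra K d 0) :
    Algebra.trace K (QuadraticAlgebra K d 0) z = 2 * z.re := by
  rw [Algebra.trace_eq_matrix_trace (QuadraticAlgebra.basis d 0) z, Matrix.trace_fin_two,
    Algebra.leftMulMatrix_eq_repr_mul, Algebra.leftMulMatrix_eq_repr_mul]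
  simp [QuadraticAlgebra.basis]
  ring

lemma norm_quad (d : K) (z : QuadraticAlgebra K d 0) :
    Algebra.norm K z = z.re ^ 2 - d * z.im ^ 2 := by
  have h : Algebra.norm K z = z.norm := QuadraticAlgebra.det_toLinearMap_eq_norm z
  rw [h, QuadraticAlgebra.norm_def]; ring

theorem quad_step (hK : ringChar K ≠ 2) (ψ : AddChar K ℂ) (hψ : ψ ≠ 1) (χ : Kˣ →* ℂˣ) (hχ : χ ≠ 1)
    (d : K) (hd : ¬ IsSquare d) [Fact (∀ r : K, r ^ 2 ≠ d + 0 * r)]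
    [Fintype (QuadraticAlgebra K d 0)] :
    rudnickSum (ψ.compAddMonoidHom (Algebra.trace K (QuadraticAlgebra K d 0)).toAddMonoidHom)
      (χ.comp (Units.map (Algebra.norm K : QuadraticAlgebra K d 0 →* K)))
      = rudnickSum ψ χ ^ 2 - 2 := by
  have h2 : (2 : K) ≠ 0 := Ring.two_ne_zero hK
  set ψ' := ψ.compAddMonoidHom (Algebra.trace K (QuadraticAlgebra K d 0)).toAddMonoidHom
  set χ' := χ.comp (Units.map (Algebra.norm K : (QuadraticAlgebra K d 0) →* K)) with hχ'
  have hlam : ∀ z : (QuadraticAlgebra K d 0), lam ψ' χ' z = Lam ψ χ (2 * z.re) (z.re ^ 2 - d * z.im ^ 2) := by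
    intro z
    have hn1 : z.re ^ 2 - d * z.im ^ 2 - 2 * z.re + 1 = Algebra.norm K (z - 1) := by
      rw [norm_quad]; simp [QuadraticAlgebra.re_one, QuadraticAlgebra.im_one]; ring
    rw [Lam, lam, hn1, Algebra.norm_eq_zero_iff, sub_eq_zero]
    by_cases hz : z = 1
    · simp [hz]
    have hz' : Algebra.norm K (z - 1) ≠ 0 := by
      rwa [Ne, Algebra.norm_eq_zero_iff, sub_eq_zero]
    rw [if_neg hz, if_neg hz]
    congr 1
    · rw [← norm_quad]
      by_cases h0 : z = 0
      · simp [h0, MulChar.map_zero]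
      · have := MulChar.ofUnitHom_coe χ' (Units.mk0 z h0)
        rw [Units.val_mk0] at this
        rw [this, hχ', MonoidHom.comp_apply, ← MulChar.ofUnitHom_coe]
        rfl
    · simp only [ψ', AddChar.compAddMonoidHom_apply]
      congr 1
      change Algebra.trace K (QuadraticAlgebra K d 0) _ = _
      have : (z + 1) / (z - 1) = (Algebra.norm K (z - 1))⁻¹ • ((z + 1) * star (z - 1)) := by
        rw [div_eq_iff (sub_ne_zero.mpr hz)]
        rw [smul_mul_assoc, mul_assoc, mul_comm (star _), ← QuadraticAlgebra.algebraMap_norm_eq_mul_star,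
          ← QuadraticAlgebra.det_toLinearMap_eq_norm]
        change _ = _ • ((z + 1) * algebraMap K (QuadraticAlgebra K d 0) (Algebra.norm K (z - 1)))
        rw [mul_comm (z + 1), ← Algebra.smul_def, smul_smul, inv_mul_cancel₀ hz', one_smul]
      rw [this, map_smul, trace_quad, smul_eq_mul, ← div_eq_inv_mul]
      congr 1
      simp [QuadraticAlgebra.re_one, QuadraticAlgebra.im_one]
      ring
  have hq2 : Fintype.card (QuadraticAlgebra K d 0) = Fintype.card K ^ 2 := by
    rw [Module.card_eq_pow_finrank (K := K), QuadraticAlgebra.finrank_eq_two]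
  have hSL : ∑ z : (QuadraticAlgebra K d 0), lam ψ' χ' z = ∑ m : K, ∑ b : K, Lam ψ χ (2 * m) (m ^ 2 - d * b ^ 2) := by
    rw [← Fintype.sum_prod_type']
    exact Fintype.sum_equiv (QuadraticAlgebra.equivProd d 0) _ _ fun z => hlam z
  have hSK : (∑ x : K, lam ψ χ x) ^ 2 = ∑ m : K, ∑ e : K, Lam ψ χ (2 * m) (m ^ 2 - e ^ 2) := by
    rw [sq, Finset.sum_mul_sum, ← Fintype.sum_prod_type', ← Fintype.sum_prod_type']
    refine Fintype.sum_bijective (fun p : K × K => ((p.1 + p.2) / 2, (p.1 - p.2) / 2)) ?_ _ _ ?_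
    · rw [Function.bijective_iff_has_inverse]
      refine ⟨fun p => (p.1 + p.2, p.1 - p.2), fun p => ?_, fun p => ?_⟩
      · ext <;> simp <;> field_simp <;> ring
      · ext <;> simp <;> field_simp <;> ring
    · intro p
      rw [lam_mul]
      congr 1
      · field_simp
      · field_simp; ring
  have hsum : (∑ x : K, lam ψ χ x) ^ 2 + ∑ z : (QuadraticAlgebra K d 0), lam ψ' χ' z = 2 * Fintype.card K := by
    rw [hSK, hSL, ← Finset.sum_add_distrib, ← sum_Lam h2 ψ hψ χ hχ, Finset.sum_comm (γ := K),
      Finset.mul_sum]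
    refine Fintype.sum_equiv (Equiv.mulLeft₀ 2 h2) _ _ fun m => ?_
    rw [sum_sq hK d hd (fun D => Lam ψ χ (2 * m) (m ^ 2 - D))]
    congr 1
    exact Fintype.sum_equiv (Equiv.subLeft (m ^ 2)) _ _ fun D => rfl
  rw [rud_eq, rud_eq, hq2]
  have hq0 : (Fintype.card K : ℂ) ≠ 0 := Nat.cast_ne_zero.mpr Fintype.card_ne_zero
  have hs : (Real.sqrt ((Fintype.card K ^ 2 : ℕ) : ℝ) : ℂ) = Fintype.card K := by
    push_cast
    rw [Real.sqrt_sq (by positivity)]; simp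
  have hs2 : (Real.sqrt (Fintype.card K) : ℂ) ^ 2 = Fintype.card K := by
    rw [← Complex.ofReal_pow, Real.sq_sqrt (by positivity)]; simp
  rw [hs, mul_pow, neg_sq, div_pow, hs2]
  field_simp
  linear_combination -hsum

end quad
end Rud

set_option linter.unusedSectionVars false

namespace Rud
section count
variable {F : Type*} [Field F] [Fintype F]

lemma frob_sum {Ω : Type*} [Field Ω] [Algebra F Ω] (w Y : Ω)
    (h : w ^ Fintype.card F = w + Y) (n : ℕ) :
    w ^ (Fintype.card F ^ n) = w + ∑ i ∈ Finset.range n, Y ^ (Fintype.card F ^ i) := by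
  induction n with
  | zero => simp
  | succ n ih =>
    obtain ⟨φ, hφ⟩ := exists_frob F Ω n
    rw [pow_succ', pow_mul, h, ← hφ, map_add, hφ, hφ, ih, Finset.sum_range_succ]
    ring

lemma pow_sum {Ω : Type*} [Field Ω] (v x : Ω) (q : ℕ) (hq : 2 ≤ q) (h : v ^ (q - 1) = x) (n : ℕ) :
    v ^ (q ^ n) = x ^ (∑ i ∈ Finset.range n, q ^ i) * v := by
  induction n with
  | zero => simp
  | succ n ih =>
    have : q ^ (n + 1) = q ^ n + (q - 1) * q ^ n := by
      obtain ⟨q', rfl⟩ : ∃ q', q = q' + 1 := ⟨q - 1, by omega⟩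
      rw [Nat.add_sub_cancel]; ring
    rw [this, pow_add, ih, pow_mul, h, Finset.sum_range_succ, pow_add]
    ring

lemma count_bound (h2 : (2 : F) ≠ 0) {L : Type*} [Field L] [Fintype L] [Algebra F L] (t : ℕ)
    (ht : 2 ≤ t) (hn : Module.finrank F L = 2 * (t + 2)) (r : ℕ)
    (hr : r = Fintype.card F ^ (t + 2)) (c α : F) (A : Finset L)
    (hA : ∀ x ∈ A, x ≠ 0 ∧ x ≠ 1 ∧ Algebra.norm F x = c ∧
      Algebra.trace F L (2 * x / (x - 1)) = α) :
    Fintype.card F * ((Fintype.card F - 1) * A.card) ≤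
      r * r + r * (Fintype.card F ^ 4 + Fintype.card F ^ 3) := by
  have hq := two_le_card (F := F)
  have hrr : r * r = Fintype.card F ^ Module.finrank F L := by
    rw [hn, hr, ← pow_add]; congr 1; omega
  let Ω := AlgebraicClosure L
  have hz : ∀ x : L, ∃ z : Ω, z ^ (Fintype.card F - 1) = algebraMap L Ω x := fun x =>
    IsAlgClosed.exists_pow_nat_eq _ (by omega)
  choose z hz using hz
  have hσ : ∀ σ : Fˣ, (algebraMap F Ω σ) ^ (Fintype.card F - 1) = 1 := by
    intro σ
    rw [← map_pow, FiniteField.pow_card_sub_one_eq_one _ σ.ne_zero, map_one]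
  let g : L × Fˣ → Ω := fun p => algebraMap F Ω p.2 * z p.1
  have hg : ∀ p, g p ^ (Fintype.card F - 1) = algebraMap L Ω p.1 := by
    intro p
    simp only [g]
    rw [mul_pow, hσ, one_mul, hz]
  have hinj : Set.InjOn g ((A ×ˢ (Finset.univ : Finset Fˣ) : Finset (L × Fˣ)) : Set (L × Fˣ)) := by
    rintro ⟨x, σ⟩ hp ⟨x', σ'⟩ hp' h
    have e1 : x = x' := by
      have := congrArg (fun v => v ^ (Fintype.card F - 1)) h
      simp only [hg] at this
      exact (algebraMap L Ω).injective this
    subst e1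
    have hx0 : x ≠ 0 := by
      have := Finset.mem_coe.mp hp
      exact (hA x (Finset.mem_product.mp this).1).1
    have hz0 : z x ≠ 0 := by
      intro h0
      have h3 := hz x
      rw [h0, zero_pow (by omega)] at h3
      exact hx0 ((map_eq_zero _).mp h3.symm)
    have := mul_right_cancel₀ hz0 h
    have := (algebraMap F Ω).injective this
    simpa using Units.ext this
  let Z := (A ×ˢ (Finset.univ : Finset Fˣ)).image g
  have hZc : Z.card = (Fintype.card F - 1) * A.card := by
    rw [Finset.card_image_of_injOn hinj, Finset.card_product, Finset.card_univ, Fintype.card_units,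
      mul_comm]
  rw [← hZc]
  refine stepanov h2 t ht c α r hr Z ?_
  intro v hv
  obtain ⟨⟨x, σ⟩, hp, rfl⟩ := Finset.mem_image.mp hv
  obtain ⟨hx0, hx1, hxN, hxT⟩ := hA x (Finset.mem_product.mp hp).1
  have hgx := hg (x, σ)
  simp only at hgx
  refine ⟨?_, ?_, ?_⟩
  · rw [hgx]
    intro h
    exact hx1 ((algebraMap L Ω).injective (by rw [h, map_one]))
  · rw [hrr, pow_sum _ _ _ hq hgx, ← map_pow, ← Nat.card_eq_fintype_card,
      ← FiniteField.algebraMap_norm_eq_pow_sum, hxN, ← IsScalarTower.algebraMap_apply]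
  · set Y : Ω := algebraMap L Ω (2 * x / (x - 1)) with hY
    obtain ⟨w, hw⟩ : ∃ w : Ω, w ^ Fintype.card F = w + Y := by
      have hd : (Polynomial.X ^ Fintype.card F - (Polynomial.X + Polynomial.C Y)
          : Polynomial Ω).degree = Fintype.card F := by
        rw [Polynomial.degree_sub_eq_left_of_degree_lt]
        · simp
        · rw [Polynomial.degree_X_add_C, Polynomial.degree_X_pow]
          exact_mod_cast hq
      obtain ⟨w, hw⟩ := IsAlgClosed.exists_root _ (hd ▸
        (by exact_mod_cast (by omega : Fintype.card F ≠ 0)) : (Polynomial.X ^ Fintype.card F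
          - (Polynomial.X + Polynomial.C Y) : Polynomial Ω).degree ≠ 0)
      refine ⟨w, ?_⟩
      simpa [sub_eq_zero] using hw
    refine ⟨w, ?_, ?_⟩
    · rw [hgx, hw, hY]
      have : x - 1 ≠ 0 := sub_ne_zero.mpr hx1
      have h3 : (x - 1) * (2 * x / (x - 1)) = 2 * x := by field_simp
      have := congrArg (algebraMap L Ω) h3
      simp only [map_mul, map_sub, map_one, map_ofNat] at this
      rw [← this]; ring
    · rw [hrr, frob_sum w Y hw, hY]
      congr 1
      rw [← hxT, IsScalarTower.algebraMap_apply F L Ω, FiniteField.algebraMap_trace_eq_sum_pow,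
        map_sum, Nat.card_eq_fintype_card]
      simp only [map_pow]

lemma norm_unit_char {K : Type*} [Field K] [Fintype K] (χ : Kˣ →* ℂˣ) (x : Kˣ) :
    ‖(χ x : ℂ)‖ = 1 := by
  refine Complex.norm_eq_one_of_pow_eq_one (n := Fintype.card Kˣ) ?_ Fintype.card_ne_zero
  rw [← Units.val_pow_eq_pow_val, ← map_pow, pow_card_eq_one, map_one, Units.val_one]

/-- Pullback of an additive character along the trace. -/
noncomputable def psiL (ψ : AddChar F ℂ) (L : Type*) [Field L] [Algebra F L] : AddChar L ℂ :=
  ψ.compAddMonoidHom (Algebra.trace F L).toAddMonoidHom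

/-- Pullback of a multiplicative character along the norm. -/
noncomputable def chiL (χ : Fˣ →* ℂˣ) (L : Type*) [Field L] [Algebra F L] : Lˣ →* ℂˣ :=
  χ.comp (Units.map (Algebra.norm F : L →* F))

lemma psiL_apply (ψ : AddChar F ℂ) (L : Type*) [Field L] [Algebra F L] (x : L) :
    psiL ψ L x = ψ (Algebra.trace F L x) := rfl

theorem bound_L (h2 : (2 : F) ≠ 0) {L : Type*} [Field L] [Fintype L] [Algebra F L] (t : ℕ)
    (ht : 2 ≤ t) (hn : Module.finrank F L = 2 * (t + 2))
    (ψ : AddChar F ℂ) (hψ : ψ ≠ 1) (χ : Fˣ →* ℂˣ) :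
    ‖rudnickSum (psiL ψ L) (chiL χ L)‖ ≤ (Fintype.card F : ℝ) ^ 4 + (Fintype.card F : ℝ) ^ 3 + 2 := by
  have hq := two_le_card (F := F)
  obtain ⟨r, hr⟩ : ∃ r, r = Fintype.card F ^ (t + 2) := ⟨_, rfl⟩
  have hr1 : 1 ≤ r := by rw [hr]; exact Nat.one_le_pow _ _ (by omega)
  have hcardL : Fintype.card L = r * r := by
    rw [Module.card_eq_pow_finrank (K := F), hn, hr, ← pow_add]; congr 1; omega
  set q := Fintype.card F with hqd
  let B : Finset Lˣ := Finset.univ.filter (fun x : Lˣ => (x : L) ≠ 1)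
  let g : Lˣ → Fˣ × F := fun x => (Units.map (Algebra.norm F : L →* F) x,
    Algebra.trace F L (((x : L) + 1) / ((x : L) - 1)))
  let a : Fˣ × F → ℂ := fun p => (χ p.1 : ℂ) * ψ p.2
  let N : Fˣ × F → ℕ := fun p => (B.filter fun x => g x = p).card
  have hBc : B.card + 2 = r * r := by
    have : B = Finset.univ.erase 1 := by
      ext x; simp [B]
    rw [this, Finset.card_erase_of_mem (Finset.mem_univ _), Finset.card_univ, Fintype.card_units,
      hcardL]
    have : 2 ≤ r * r := by
      have := two_le_card (F := L)
      omega
    omega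
  have hNsum : ∑ p, N p = B.card := (Finset.card_eq_sum_card_fiberwise (by simp)).symm
  have hS : ∑ x ∈ B, (chiL χ L x : ℂ) * psiL ψ L (((x : L) + 1) / ((x : L) - 1))
      = ∑ p, (N p : ℂ) * a p := by
    rw [← Finset.sum_fiberwise (s := B) (g := g)]
    refine Finset.sum_congr rfl fun p _ => ?_
    rw [Finset.sum_congr rfl (g := fun _ => a p) (by
      intro x hx; rw [← (Finset.mem_filter.mp hx).2]; rfl)]
    rw [Finset.sum_const, nsmul_eq_mul]
  have hNb : ∀ p, q * ((q - 1) * N p) ≤ r * r + r * (q ^ 4 + q ^ 3) := by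
    intro p
    have hc : N p = ((B.filter fun x => g x = p).image (fun x : Lˣ => (x : L))).card := by
      rw [Finset.card_image_of_injective _ (fun x y h => Units.ext h)]
    rw [hc]
    refine count_bound h2 t ht hn r hr p.1 (p.2 + Algebra.trace F L 1) _ ?_
    intro x hx
    obtain ⟨u, hu, rfl⟩ := Finset.mem_image.mp hx
    obtain ⟨huB, hup⟩ := Finset.mem_filter.mp hu
    have hu1 : (u : L) ≠ 1 := (Finset.mem_filter.mp huB).2
    refine ⟨u.ne_zero, hu1, ?_, ?_⟩
    · rw [← hup]; rfl
    · rw [← hup]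
      simp only [g]
      rw [← map_add]
      congr 1
      have := sub_ne_zero.mpr hu1
      field_simp
      ring
  have ha0 : ∑ p, a p = 0 := by
    simp only [a]
    rw [Fintype.sum_prod_type]
    refine Finset.sum_eq_zero fun c _ => ?_
    dsimp only
    rw [← Finset.mul_sum, AddChar.sum_eq_zero_of_ne_one hψ, mul_zero]
  have han : ∀ p, ‖a p‖ = 1 := by
    intro p
    simp only [a]
    rw [norm_mul, norm_unit_char, AddChar.norm_apply, one_mul]
  have hq2 : (2 : ℝ) ≤ q := by exact_mod_cast hq
  have hqq : (0 : ℝ) < q * (q - 1) := by nlinarith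
  let M : ℝ := (r * r + r * (q ^ 4 + q ^ 3)) / (q * (q - 1))
  have hNM : ∀ p, (N p : ℝ) ≤ M := by
    intro p
    rw [le_div_iff₀ hqq]
    have := hNb p
    have h3 : ((q * ((q - 1) * N p) : ℕ) : ℝ) ≤ ((r * r + r * (q ^ 4 + q ^ 3) : ℕ) : ℝ) := by
      exact_mod_cast this
    push_cast [Nat.cast_sub (show 1 ≤ q by omega)] at h3
    linarith
  have hSn : ‖∑ p, (N p : ℂ) * a p‖ ≤ r * (q ^ 4 + q ^ 3) + 2 := by
    have e1 : ∑ p, (N p : ℂ) * a p = ∑ p, ((N p - M : ℝ) : ℂ) * a p := by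
      push_cast
      simp only [sub_mul, Finset.sum_sub_distrib]
      rw [← Finset.mul_sum, ha0, mul_zero, sub_zero]
    rw [e1]
    calc _ ≤ ∑ p, ‖((N p - M : ℝ) : ℂ) * a p‖ := norm_sum_le _ _
      _ = ∑ p, (M - N p) := by
        refine Finset.sum_congr rfl fun p _ => ?_
        rw [norm_mul, han, mul_one, Complex.norm_real, Real.norm_eq_abs, abs_sub_comm,
          abs_of_nonneg (by linarith [hNM p])]
      _ = q * (q - 1) * M - B.card := by
        rw [Finset.sum_sub_distrib, ← hNsum, Finset.sum_const, Finset.card_univ,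
          Fintype.card_prod, Fintype.card_units, nsmul_eq_mul]
        push_cast [Nat.cast_sub (show 1 ≤ q by omega), ← hqd]
        ring
      _ = r * (q ^ 4 + q ^ 3) + 2 := by
        have h5 : (B.card : ℝ) + 2 = r * r := by exact_mod_cast hBc
        simp only [M]
        rw [mul_div_cancel₀ _ hqq.ne']
        linarith
  have hr1' : (1 : ℝ) ≤ r := by exact_mod_cast hr1
  rw [rudnickSum]
  change ‖_ * ∑ x ∈ B, (chiL χ L x : ℂ) * psiL ψ L (((x : L) + 1) / ((x : L) - 1))‖ ≤ _
  rw [hS, norm_mul, norm_neg, norm_div, norm_one, Complex.norm_real, hcardL]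
  push_cast
  rw [Real.sqrt_mul_self (by linarith), Real.norm_of_nonneg (by linarith), one_div,
    inv_mul_le_iff₀ (by linarith)]
  refine hSn.trans ?_
  nlinarith
end count
end Rud

set_option linter.unusedSectionVars false

namespace Rud
section final
universe u
variable {F : Type u} [Field F] [Fintype F]

lemma psiL_ne (ψ : AddChar F ℂ) (hψ : ψ ≠ 1) (L : Type*) [Field L] [Fintype L] [Algebra F L] :
    psiL ψ L ≠ 1 := by
  intro h
  apply hψ
  ext x
  obtain ⟨y, rfl⟩ := Algebra.trace_surjective F L x
  rw [← psiL_apply, h]; simp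

lemma chiL_ne (χ : Fˣ →* ℂˣ) (hχ : χ ≠ 1) (L : Type*) [Field L] [Fintype L] [Algebra F L] :
    chiL χ L ≠ 1 := by
  intro h
  apply hχ
  ext x
  obtain ⟨y, rfl⟩ := FiniteField.unitsMap_norm_surjective F L x
  have := congrArg (fun f => f y) h
  simp only [chiL, MonoidHom.comp_apply] at this
  rw [this]; simp

theorem tower (hF : ringChar F ≠ 2) (ψ : AddChar F ℂ) (hψ : ψ ≠ 1) (χ : Fˣ →* ℂˣ) (hχ : χ ≠ 1)
    (k : ℕ) : ∃ (L : Type u) (_ : Field L) (_ : Fintype L) (_ : Algebra F L),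
      Module.finrank F L = 2 ^ k ∧
      rudnickSum (psiL ψ L) (chiL χ L) = (fun x : ℂ => x ^ 2 - 2)^[k] (rudnickSum ψ χ) := by
  induction k with
  | zero =>
    refine ⟨F, inferInstance, inferInstance, inferInstance, by simp, ?_⟩
    have h1 : psiL ψ F = ψ := by ext x; rw [psiL_apply, Algebra.trace_self_apply]
    have h2 : chiL χ F = χ := by
      ext x
      simp [chiL, Algebra.norm_self]
    rw [h1, h2]; rfl
  | succ k ih =>
    obtain ⟨L, _, _, _, hfin, hE⟩ := ih
    have hL : ringChar L ≠ 2 := by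
      rwa [← Algebra.ringChar_eq F L]
    obtain ⟨d, hd⟩ := FiniteField.exists_nonsquare hL
    haveI : Fact (∀ r : L, r ^ 2 ≠ d + 0 * r) := ⟨fun r h => hd ⟨r, by
      rw [← sq, h]; ring⟩⟩
    letI : Fintype (QuadraticAlgebra L d 0) :=
      Fintype.ofEquiv _ (QuadraticAlgebra.equivProd d 0).symm
    haveI : IsScalarTower F L (QuadraticAlgebra L d 0) := inferInstance
    refine ⟨QuadraticAlgebra L d 0, inferInstance, inferInstance, inferInstance, ?_, ?_⟩
    · rw [← Module.finrank_mul_finrank F L, hfin, QuadraticAlgebra.finrank_eq_two, pow_succ]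
    · have := quad_step hL (psiL ψ L) (psiL_ne ψ hψ L) (chiL χ L) (chiL_ne χ hχ L) d hd
      rw [Function.iterate_succ_apply', ← hE, ← this]
      congr 1
      · ext x
        simp only [psiL_apply, AddChar.compAddMonoidHom_apply]
        congr 1
        exact (Algebra.trace_trace (R := F) (S := L) x).symm
      · ext x
        simp only [chiL, MonoidHom.comp_apply]
        congr 2
        ext
        simp [Algebra.norm_norm]

theorem bound (hF : ringChar F ≠ 2) (ψ : AddChar F ℂ) (hψ : ψ ≠ 1) (χ : Fˣ →* ℂˣ) (hχ : χ ≠ 1) :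
    ‖rudnickSum ψ χ‖ ≤ 2 := by
  by_contra hcon
  push Not at hcon
  set E := rudnickSum ψ χ
  have hgrow : ∀ k, 2 + 4 ^ k * (‖E‖ - 2) ≤ ‖(fun x : ℂ => x ^ 2 - 2)^[k] E‖ := by
    intro k
    induction k with
    | zero => simp
    | succ k ih =>
      rw [Function.iterate_succ_apply']
      set y := (fun x : ℂ => x ^ 2 - 2)^[k] E
      have h1 : ‖y‖ ^ 2 - 2 ≤ ‖y ^ 2 - 2‖ := by
        have := norm_sub_norm_le (y ^ 2) 2
        rw [norm_pow] at this
        simpa using this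
      refine le_trans ?_ h1
      have h3 : 0 ≤ 4 ^ k * (‖E‖ - 2) := mul_nonneg (by positivity) (by linarith)
      rw [pow_succ]
      nlinarith
  set C : ℝ := (Fintype.card F : ℝ) ^ 4 + (Fintype.card F : ℝ) ^ 3 + 2
  have hbd : ∀ k, (fun x : ℂ => x ^ 2 - 2)^[k + 3] E = (fun x : ℂ => x ^ 2 - 2)^[k + 3] E →
      ‖(fun x : ℂ => x ^ 2 - 2)^[k + 3] E‖ ≤ C := by
    intro k _
    obtain ⟨L, _, _, _, hfin, hE⟩ := tower hF ψ hψ χ hχ (k + 3)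
    rw [← hE]
    have hk : 1 ≤ 2 ^ k := Nat.one_le_two_pow
    refine bound_L (Ring.two_ne_zero hF) (2 ^ (k + 2) - 2) ?_ ?_ ψ hψ χ
    · rw [pow_add]; omega
    · rw [hfin, pow_succ, pow_add]; omega
  obtain ⟨k, hk⟩ := exists_nat_gt (C / (‖E‖ - 2))
  rw [div_lt_iff₀ (by linarith)] at hk
  have h1 := hgrow (k + 3)
  have h2 := hbd k rfl
  have h3 : (k : ℝ) ≤ 4 ^ (k + 3) := by
    have : k < 4 ^ k := Nat.lt_pow_self (by norm_num)
    have h4 : k ≤ 4 ^ (k + 3) := this.le.trans (Nat.pow_le_pow_right (by norm_num) (by omega))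
    exact_mod_cast h4
  have h5 : (k : ℝ) * (‖E‖ - 2) ≤ 4 ^ (k + 3) * (‖E‖ - 2) :=
    mul_le_mul_of_nonneg_right h3 (by linarith)
  linarith

theorem real (ψ : AddChar F ℂ) (χ : Fˣ →* ℂˣ) :
    (starRingEnd ℂ) (rudnickSum ψ χ) = rudnickSum ψ χ := by
  rw [rudnickSum, map_mul, map_neg, map_div₀, map_one, Complex.conj_ofReal, map_sum]
  congr 1
  refine Finset.sum_bij' (fun x _ => x⁻¹) (fun x _ => x⁻¹) ?_ ?_ ?_ ?_ ?_
  · intro x hx; simpa using hx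
  · intro x hx; simpa using hx
  · intro x _; simp
  · intro x _; simp
  · intro x hx
    have hx1 : (x : F) ≠ 1 := by simpa using hx
    have hx1' := sub_ne_zero.mpr hx1
    have hx1'' : 1 - (x : F) ≠ 0 := sub_ne_zero.mpr hx1.symm
    have hx0 := x.ne_zero
    rw [map_mul, ← AddChar.map_neg_eq_conj, map_inv, Units.val_inv_eq_inv_val,
      Complex.inv_eq_conj (norm_unit_char χ x), Units.val_inv_eq_inv_val]
    congr 2
    field_simp
    ring
end final
end Rud

/-- **Reality and bound for Rudnick sums.** For every finite field `F_q` of odd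
characteristic, every nontrivial additive character `ψ` and every nontrivial multiplicative
character `χ`, the Rudnick sum `E(χ)` is real and satisfies `|E(χ)| ≤ 2`. -/
theorem rudnickSum_real_and_bounded
    {F : Type*} [Field F] [Fintype F] (hchar : ringChar F ≠ 2)
    (ψ : AddChar F ℂ) (hψ : ψ ≠ 1) (χ : Fˣ →* ℂˣ) (hχ : χ ≠ 1) :
    (starRingEnd ℂ) (rudnickSum ψ χ) = rudnickSum ψ χ ∧ ‖rudnickSum ψ χ‖ ≤ 2 := by
  exact ⟨Rud.real ψ χ, Rud.bound hchar ψ hψ χ hχ⟩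
end
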